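/- Let F_1,...,F_k be positive real numbers and n_1,...,n_k unit vectors in R^m (m ≥ 2) not all lying in a single hyperplane through the origin, satisfying Σ_j F_j n_j = 0. Then there exists a compact convex polytope P in R^m, unique up to translation, whose facets have exactly the outward unit normals n_1,...,n_k with (m−1)-dimensional volumes F_1,...,F_k respectively. -/

import Mathlib

open MeasureTheory Set
open scoped ENNReal Pointwise RealInnerProductSpace Topology

noncomputable section

abbrev Euc (m : ℕ) : Type := EuclideanSpace ℝ (Fin m)

/-- A convex body: compact convex set with nonempty interior. -/
def IsConvexBody {m : ℕ} (K : Set (Euc m)) : Prop :=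
  Convex ℝ K ∧ IsCompact K ∧ (interior K).Nonempty

/-- A (compact convex) polytope: convex hull of a finite set. -/
def IsPolytope {m : ℕ} (P : Set (Euc m)) : Prop :=
  ∃ s : Finset (Euc m), P = convexHull ℝ (s : Set (Euc m))

def unitSphere (m : ℕ) : Set (Euc m) := Metric.sphere 0 1

/-- `n` is an outward unit normal to `K` at the boundary point `x`. -/
def IsOutwardNormalAt {m : ℕ} (K : Set (Euc m)) (x n : Euc m) : Prop :=
  x ∈ frontier K ∧ ‖n‖ = 1 ∧ ∀ y ∈ K, ⟪y - x, n⟫ ≤ 0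

open Classical in
/-- The (set-valued choice of) Gauss map of `K`. -/
def gaussMap {m : ℕ} (K : Set (Euc m)) (x : Euc m) : Euc m :=
  if h : ∃ n, IsOutwardNormalAt K x n then h.choose else 0

/-- The surface area measure of `K`: the pushforward under the Gauss map of the
`(m-1)`-dimensional Hausdorff measure on the boundary of `K`. -/
def surfMeasure {m : ℕ} (K : Set (Euc m)) : Measure (Euc m) :=
  Measure.map (gaussMap K) (μH[(m : ℝ) - 1].restrict (frontier K))

/-- The face of `P` in direction `n`. -/
def faceIn {m : ℕ} (P : Set (Euc m)) (n : Euc m) : Set (Euc m) :=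
  {x ∈ P | ∀ y ∈ P, ⟪y, n⟫ ≤ ⟪x, n⟫}

/-- The `(m-1)`-dimensional volume of the face of `P` in direction `n`. -/
def faceArea {m : ℕ} (P : Set (Euc m)) (n : Euc m) : ℝ≥0∞ :=
  μH[(m : ℝ) - 1] (faceIn P n)

/-- `n` is the outward unit normal to a facet ((m-1)-dimensional face) of `P`. -/
def IsFacetNormal {m : ℕ} (P : Set (Euc m)) (n : Euc m) : Prop :=
  ‖n‖ = 1 ∧ 0 < faceArea P n

/-- The Brunn–Minkowski inequality on the real line. -/
theorem Real.volume_add_volume_le {A B C : Set ℝ} (hA : MeasurableSet A) (hB : MeasurableSet B)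
    (hA0 : A.Nonempty) (hB0 : B.Nonempty) (h : A + B ⊆ C) :
    volume A + volume B ≤ volume C := by
  rw [hA.measure_eq_iSup_isCompact, hB.measure_eq_iSup_isCompact]
  obtain ⟨a₀, ha₀⟩ := hA0
  obtain ⟨b₀, hb₀⟩ := hB0
  simp only [iSup_and']
  refine ENNReal.biSup_add_biSup_le' ⟨∅, by simp⟩ ⟨∅, by simp⟩ ?_
  rintro K ⟨hKA, hK⟩ K' ⟨hKB, hK'⟩
  obtain ⟨a, haK, ha⟩ := (hK.insert a₀).exists_isGreatest ⟨a₀, mem_insert _ _⟩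
  obtain ⟨b, hbK, hb⟩ := (hK'.insert b₀).exists_isLeast ⟨b₀, mem_insert _ _⟩
  have haA : a ∈ A := (insert_subset ha₀ hKA) haK
  have hbB : b ∈ B := (insert_subset hb₀ hKB) hbK
  have hsub : (b +ᵥ K) ∪ (a +ᵥ K') ⊆ C := by
    rintro x (⟨y, hy, rfl⟩ | ⟨y, hy, rfl⟩)
    · exact h ⟨y, hKA hy, b, hbB, by simp [add_comm]⟩
    · exact h ⟨a, haA, y, hKB hy, rfl⟩
  have hdisj : AEDisjoint volume (b +ᵥ K) (a +ᵥ K') := by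
    refine measure_mono_null (t := {a + b}) ?_ (by simp)
    rintro x ⟨⟨y, hy, rfl⟩, ⟨z, hz, hyz⟩⟩
    have h1 := ha (mem_insert_of_mem a₀ hy)
    have h2 := hb (mem_insert_of_mem b₀ hz)
    simp only [vadd_eq_add, mem_singleton_iff] at hyz ⊢
    linarith
  calc volume K + volume K' = volume ((b +ᵥ K) ∪ (a +ᵥ K')) := by
        rw [measure_union₀ (hK'.measurableSet.const_vadd a).nullMeasurableSet hdisj]
        simp
    _ ≤ volume C := measure_mono hsub

/-- The Prékopa–Leindler inequality on the real line, for functions with supremum one. -/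
theorem prekopa_leindler_real_normalized {f g h : ℝ → ℝ} {t : ℝ} (ht0 : 0 < t) (ht1 : t < 1)
    (hf : Measurable f) (hg : Measurable g) (hh : Measurable h)
    (hf0 : ∀ x, 0 ≤ f x) (hg0 : ∀ x, 0 ≤ g x) (hh0 : ∀ x, 0 ≤ h x)
    (hf1 : ∀ x, f x ≤ 1) (hg1 : ∀ x, g x ≤ 1)
    (hfs : ∀ r < 1, ∃ x, r < f x) (hgs : ∀ r < 1, ∃ x, r < g x)
    (hfg : ∀ x y, 0 < f x → 0 < g y → f x ^ (1 - t) * g y ^ t ≤ h ((1 - t) * x + t * y)) :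
    (∫⁻ x, ENNReal.ofReal (f x)) ^ (1 - t) * (∫⁻ x, ENNReal.ofReal (g x)) ^ t ≤
      ∫⁻ x, ENNReal.ofReal (h x) := by
  have ht1' : 0 < 1 - t := by linarith
  have layer : ∀ p : ℝ → ℝ, Measurable p → (∀ x, 0 ≤ p x) → (∀ x, p x ≤ 1) →
      ∫⁻ x, ENNReal.ofReal (p x) = ∫⁻ r in Ioo (0 : ℝ) 1, volume {x | r < p x} := by
    intro p hp hp0 hp1
    rw [lintegral_eq_lintegral_meas_lt volume (ae_of_all _ hp0) hp.aemeasurable,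
      ← Ioo_union_Ici_eq_Ioi zero_lt_one, lintegral_union measurableSet_Ici]
    · rw [setLIntegral_congr_fun (g := fun _ => 0) measurableSet_Ici]
      · simp
      · intro r hr
        have : {x | r < p x} = ∅ := by
          ext x
          simp only [mem_ofPred_eq, mem_empty_iff_false, iff_false, not_lt]
          exact (hp1 x).trans hr
        simp [this]
    · exact disjoint_left.2 fun x hx hx' => absurd hx.2 (not_lt.2 hx')
  have mono : ∀ p : ℝ → ℝ, Antitone fun r : ℝ => volume {x | r < p x} := fun p r s hrs =>
    measure_mono fun x hx => lt_of_le_of_lt hrs hx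
  have key : ∀ r ∈ Ioo (0 : ℝ) 1, ENNReal.ofReal (1 - t) * volume {x | r < f x} +
      ENNReal.ofReal t * volume {x | r < g x} ≤ volume {x | r < h x} := by
    intro r hr
    have e1 : ∀ s : ℝ, 0 < s → ∀ S : Set ℝ, ENNReal.ofReal s * volume S = volume (s • S) := by
      intro s hs S
      rw [Measure.addHaar_smul]
      simp [abs_of_pos hs]
    rw [e1 _ ht1', e1 _ ht0]
    refine Real.volume_add_volume_le ?_ ?_ ?_ ?_ ?_
    · exact (measurableSet_lt measurable_const hf).const_smul₀ _
    · exact (measurableSet_lt measurable_const hg).const_smul₀ _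
    · exact Set.Nonempty.smul_set (hfs r hr.2)
    · exact Set.Nonempty.smul_set (hgs r hr.2)
    · rintro _ ⟨_, ⟨x, hx, rfl⟩, _, ⟨y, hy, rfl⟩, rfl⟩
      simp only [mem_ofPred_eq, smul_eq_mul] at hx hy ⊢
      refine lt_of_lt_of_le ?_ (hfg x y (hr.1.trans hx) (hr.1.trans hy))
      calc r = r ^ (1 - t) * r ^ t := by rw [← Real.rpow_add hr.1]; simp
        _ < f x ^ (1 - t) * g y ^ t := by
          apply mul_lt_mul'' (Real.rpow_lt_rpow hr.1.le hx ht1')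
            (Real.rpow_lt_rpow hr.1.le hy ht0) <;> exact Real.rpow_nonneg hr.1.le _
  calc (∫⁻ x, ENNReal.ofReal (f x)) ^ (1 - t) * (∫⁻ x, ENNReal.ofReal (g x)) ^ t
      ≤ ENNReal.ofReal (1 - t) * (∫⁻ x, ENNReal.ofReal (f x)) +
        ENNReal.ofReal t * (∫⁻ x, ENNReal.ofReal (g x)) := by
        have hpq : (1 - t)⁻¹.HolderConjugate t⁻¹ :=
          Real.HolderConjugate.inv_inv ht1' ht0 (by ring)
        have hw := ENNReal.young_inequality ((∫⁻ x, ENNReal.ofReal (f x)) ^ (1 - t))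
          ((∫⁻ x, ENNReal.ofReal (g x)) ^ t) hpq
        rwa [ENNReal.rpow_rpow_inv ht1'.ne', ENNReal.rpow_rpow_inv ht0.ne',
          ENNReal.ofReal_inv_of_pos ht1', ENNReal.ofReal_inv_of_pos ht0, div_eq_mul_inv,
          div_eq_mul_inv, inv_inv, inv_inv, mul_comm _ (ENNReal.ofReal (1 - t)),
          mul_comm _ (ENNReal.ofReal t)] at hw
    _ = ∫⁻ r in Ioo (0 : ℝ) 1, (ENNReal.ofReal (1 - t) * volume {x | r < f x} +
          ENNReal.ofReal t * volume {x | r < g x}) := by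
        rw [layer f hf hf0 hf1, layer g hg hg0 hg1, lintegral_add_left, lintegral_const_mul,
          lintegral_const_mul]
        · exact (mono g).measurable
        · exact (mono f).measurable
        · exact (mono f).measurable.const_mul _
    _ ≤ ∫⁻ r in Ioo (0 : ℝ) 1, volume {x | r < h x} :=
        setLIntegral_mono (mono h).measurable key
    _ ≤ ∫⁻ r in Ioi (0 : ℝ), volume {x | r < h x} :=
        lintegral_mono_set Ioo_subset_Ioi_self
    _ = ∫⁻ x, ENNReal.ofReal (h x) :=
        (lintegral_eq_lintegral_meas_lt volume (ae_of_all _ hh0) hh.aemeasurable).symm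

/-- The Prékopa–Leindler inequality on the real line, for bounded functions. -/
theorem prekopa_leindler_real {f g h : ℝ → ℝ} {t : ℝ} (ht0 : 0 < t) (ht1 : t < 1)
    (hf : Measurable f) (hg : Measurable g) (hh : Measurable h)
    (hf0 : ∀ x, 0 ≤ f x) (hg0 : ∀ x, 0 ≤ g x) (hh0 : ∀ x, 0 ≤ h x)
    (hfb : BddAbove (range f)) (hgb : BddAbove (range g))
    (hfg : ∀ x y, 0 < f x → 0 < g y → f x ^ (1 - t) * g y ^ t ≤ h ((1 - t) * x + t * y)) :
    (∫⁻ x, ENNReal.ofReal (f x)) ^ (1 - t) * (∫⁻ x, ENNReal.ofReal (g x)) ^ t ≤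
      ∫⁻ x, ENNReal.ofReal (h x) := by
  have ht1' : 0 < 1 - t := by linarith
  by_cases hfz : ∀ x, f x = 0
  · simp [hfz, ht1']
  by_cases hgz : ∀ x, g x = 0
  · simp [hgz, ht0]
  push Not at hfz hgz
  obtain ⟨x₀, hx₀⟩ := hfz
  obtain ⟨y₀, hy₀⟩ := hgz
  set a := ⨆ x, f x with ha
  set b := ⨆ x, g x with hb
  have ha0 : 0 < a := lt_of_lt_of_le ((hf0 x₀).lt_of_ne' hx₀) (le_ciSup hfb x₀)
  have hb0 : 0 < b := lt_of_lt_of_le ((hg0 y₀).lt_of_ne' hy₀) (le_ciSup hgb y₀)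
  have hc0 : 0 < a ^ (1 - t) * b ^ t := mul_pos (Real.rpow_pos_of_pos ha0 _)
    (Real.rpow_pos_of_pos hb0 _)
  have scale : ∀ (p : ℝ → ℝ) (c : ℝ), 0 < c → Measurable p →
      ∫⁻ x, ENNReal.ofReal (p x) = ENNReal.ofReal c * ∫⁻ x, ENNReal.ofReal (p x / c) := by
    intro p c hc hp
    rw [← lintegral_const_mul _ (by fun_prop)]
    refine lintegral_congr fun x => ?_
    rw [← ENNReal.ofReal_mul hc.le, mul_div_cancel₀ _ hc.ne']
  have hnorm := prekopa_leindler_real_normalized (f := fun x => f x / a) (g := fun x => g x / b)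
    (h := fun x => h x / (a ^ (1 - t) * b ^ t)) ht0 ht1 (by fun_prop) (by fun_prop) (by fun_prop)
    (fun x => div_nonneg (hf0 x) ha0.le) (fun x => div_nonneg (hg0 x) hb0.le)
    (fun x => div_nonneg (hh0 x) hc0.le)
    (fun x => (div_le_one ha0).2 (le_ciSup hfb x)) (fun x => (div_le_one hb0).2 (le_ciSup hgb x))
    (fun r hr => by
      obtain ⟨x, hx⟩ := exists_lt_of_lt_ciSup (show r * a < ⨆ x, f x by rw [← ha]; nlinarith)
      exact ⟨x, (lt_div_iff₀ ha0).2 hx⟩)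
    (fun r hr => by
      obtain ⟨x, hx⟩ := exists_lt_of_lt_ciSup (show r * b < ⨆ x, g x by rw [← hb]; nlinarith)
      exact ⟨x, (lt_div_iff₀ hb0).2 hx⟩)
    (fun x y hx hy => by
      have hx' : 0 < f x := by simpa [ha0] using (div_pos_iff_of_pos_right ha0).1 hx
      have hy' : 0 < g y := by simpa [hb0] using (div_pos_iff_of_pos_right hb0).1 hy
      rw [Real.div_rpow (hf0 x) ha0.le, Real.div_rpow (hg0 y) hb0.le, div_mul_div_comm]
      exact div_le_div_of_nonneg_right (hfg x y hx' hy') hc0.le)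
  rw [scale f a ha0 hf, scale g b hb0 hg, scale h _ hc0 hh,
    ENNReal.mul_rpow_of_nonneg _ _ ht1'.le, ENNReal.mul_rpow_of_nonneg _ _ ht0.le,
    mul_mul_mul_comm, ENNReal.ofReal_mul (Real.rpow_nonneg ha0.le _),
    ENNReal.ofReal_rpow_of_pos ha0, ENNReal.ofReal_rpow_of_pos hb0]
  gcongr

/-- The multiplicative Brunn–Minkowski inequality in `Fin d → ℝ`. -/
theorem brunn_minkowski_pi {t : ℝ} (ht0 : 0 < t) (ht1 : t < 1) (d : ℕ) :
    ∀ {K L M : Set (Fin d → ℝ)}, MeasurableSet K → MeasurableSet L → MeasurableSet M →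
      Bornology.IsBounded K → Bornology.IsBounded L → Bornology.IsBounded M →
      (∀ x ∈ K, ∀ y ∈ L, (1 - t) • x + t • y ∈ M) →
      volume K ^ (1 - t) * volume L ^ t ≤ volume M := by
  have ht1' : 0 < 1 - t := by linarith
  induction d with
  | zero =>
    intro K L M _ _ _ _ _ _ h
    rcases K.eq_empty_or_nonempty with rfl | ⟨x, hx⟩
    · simp [ht1']
    rcases L.eq_empty_or_nonempty with rfl | ⟨y, hy⟩
    · simp [ht0]
    rw [Subsingleton.eq_univ_of_nonempty ⟨x, hx⟩, Subsingleton.eq_univ_of_nonempty ⟨y, hy⟩,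
      Subsingleton.eq_univ_of_nonempty ⟨_, h x hx y hy⟩]
    simp [Measure.volume_pi_eq_dirac (0 : Fin 0 → ℝ)]
  | succ d ih =>
    intro K L M hK hL hM hKb hLb hMb h
    let e := MeasurableEquiv.piFinSuccAbove (fun _ : Fin (d + 1) => ℝ) 0
    let sl : Set (Fin (d + 1) → ℝ) → ℝ → Set (Fin d → ℝ) := fun S s =>
      Prod.mk s ⁻¹' (e.symm ⁻¹' S)
    have hmp : MeasurePreserving e.symm :=
      (volume_preserving_piFinSuccAbove (fun _ : Fin (d + 1) => ℝ) 0).symm _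
    have hslm : ∀ S, MeasurableSet S → ∀ s, MeasurableSet (sl S s) := fun S hS s =>
      measurable_prodMk_left (e.symm.measurable hS)
    have hmem : ∀ S s y, y ∈ sl S s ↔ (Fin.cons s y : Fin (d + 1) → ℝ) ∈ S := by
      intro S s y
      simp [sl, e, MeasurableEquiv.piFinSuccAbove, Fin.insertNthEquiv]
    have hbd : ∀ S, Bornology.IsBounded S → ∃ R : ℝ, 0 ≤ R ∧
        ∀ s, sl S s ⊆ Metric.closedBall 0 R := by
      intro S hS
      obtain ⟨R, hR⟩ := hS.subset_closedBall 0
      refine ⟨max R 0, le_max_right _ _, fun s y hy => ?_⟩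
      have := hR ((hmem S s y).1 hy)
      rw [mem_closedBall_zero_iff] at this ⊢
      rw [pi_norm_le_iff_of_nonneg (le_max_right _ _)]
      intro i
      have h2 := (norm_le_pi_norm (Fin.cons s y : Fin (d + 1) → ℝ) i.succ).trans this
      simpa using Or.inl h2
    have hfin : ∀ S, Bornology.IsBounded S → ∀ s, volume (sl S s) ≠ ∞ := by
      intro S hS s
      obtain ⟨R, -, hR⟩ := hbd S hS
      exact ((measure_mono (hR s)).trans_lt measure_closedBall_lt_top).ne
    have hint : ∀ S, MeasurableSet S → Bornology.IsBounded S →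
        volume S = ∫⁻ s, ENNReal.ofReal (volume (sl S s)).toReal := by
      intro S hS hSb
      rw [← hmp.measure_preimage hS.nullMeasurableSet, Measure.volume_eq_prod,
        Measure.prod_apply (e.symm.measurable hS)]
      exact lintegral_congr fun s => (ENNReal.ofReal_toReal (hfin S hSb s)).symm
    have hmeas : ∀ S, MeasurableSet S → Measurable fun s => (volume (sl S s)).toReal := fun S hS =>
      (measurable_measure_prodMk_left (e.symm.measurable hS)).ennreal_toReal
    have hbdd : ∀ S, Bornology.IsBounded S →
        BddAbove (range fun s => (volume (sl S s)).toReal) := by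
      intro S hS
      obtain ⟨R, -, hR⟩ := hbd S hS
      refine ⟨(volume (Metric.closedBall (0 : Fin d → ℝ) R)).toReal, ?_⟩
      rintro _ ⟨s, rfl⟩
      exact ENNReal.toReal_mono measure_closedBall_lt_top.ne (measure_mono (hR s))
    rw [hint K hK hKb, hint L hL hLb, hint M hM hMb]
    refine prekopa_leindler_real ht0 ht1 (hmeas K hK) (hmeas L hL) (hmeas M hM)
      (fun _ => ENNReal.toReal_nonneg) (fun _ => ENNReal.toReal_nonneg)
      (fun _ => ENNReal.toReal_nonneg) (hbdd K hKb) (hbdd L hLb) ?_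
    intro x y _ _
    rw [ENNReal.toReal_rpow, ENNReal.toReal_rpow, ← ENNReal.toReal_mul]
    refine ENNReal.toReal_mono (hfin M hMb _)
      (ih (hslm K hK x) (hslm L hL y) (hslm M hM _) ?_ ?_ ?_ ?_)
    · obtain ⟨R, -, hR⟩ := hbd K hKb
      exact Metric.isBounded_closedBall.subset (hR x)
    · obtain ⟨R, -, hR⟩ := hbd L hLb
      exact Metric.isBounded_closedBall.subset (hR y)
    · obtain ⟨R, -, hR⟩ := hbd M hMb
      exact Metric.isBounded_closedBall.subset (hR _)
    · intro a ha b hb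
      rw [hmem] at ha hb ⊢
      convert h _ ha _ hb using 1
      ext i
      refine Fin.cases ?_ (fun j => ?_) i <;> simp

/-- The multiplicative Brunn–Minkowski inequality in Euclidean space. -/
theorem brunn_minkowski_euclidean {t : ℝ} (ht0 : 0 < t) (ht1 : t < 1) {d : ℕ}
    {K L M : Set (EuclideanSpace ℝ (Fin d))}
    (hK : MeasurableSet K) (hL : MeasurableSet L) (hM : MeasurableSet M)
    (hKb : Bornology.IsBounded K) (hLb : Bornology.IsBounded L) (hMb : Bornology.IsBounded M)
    (h : ∀ x ∈ K, ∀ y ∈ L, (1 - t) • x + t • y ∈ M) :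
    volume K ^ (1 - t) * volume L ^ t ≤ volume M := by
  have hmp := PiLp.volume_preserving_toLp (Fin d)
  have hb : ∀ S : Set (EuclideanSpace ℝ (Fin d)), Bornology.IsBounded S →
      Bornology.IsBounded (@WithLp.toLp 2 (Fin d → ℝ) ⁻¹' S) := fun S hS =>
    (PiLp.antilipschitzWith_toLp 2 (fun _ : Fin d => ℝ)).isBounded_preimage hS
  rw [← hmp.measure_preimage hK.nullMeasurableSet, ← hmp.measure_preimage hL.nullMeasurableSet,
    ← hmp.measure_preimage hM.nullMeasurableSet]
  refine brunn_minkowski_pi ht0 ht1 d (hmp.measurable hK) (hmp.measurable hL) (hmp.measurable hM)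
    (hb K hKb) (hb L hLb) (hb M hMb) fun x hx y hy => ?_
  have := h _ hx _ hy
  simpa using this

/-- Basic properties of the primitive of a function that is integrable on `[a, b]` and continuous on
`(a, b)`. -/
theorem primitive_properties {f : ℝ → ℝ} {a b : ℝ} (hab : a < b) (hf : ContinuousOn f (Ioo a b))
    (hfi : IntervalIntegrable f volume a b) :
    ContinuousOn (fun x => ∫ r in a..x, f r) (Icc a b) ∧
      ∀ x ∈ Ioo a b, HasDerivAt (fun x => ∫ r in a..x, f r) (f x) x := by
  refine ⟨?_, fun x hx => ?_⟩
  · simpa [uIcc_of_le hab.le] using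
      intervalIntegral.continuousOn_primitive_interval' hfi left_mem_uIcc
  · refine intervalIntegral.integral_hasDerivAt_right
      (hfi.mono_set (uIcc_subset_uIcc left_mem_uIcc ?_))
      (hf.stronglyMeasurableAtFilter isOpen_Ioo x hx) (hf.continuousAt (isOpen_Ioo.mem_nhds hx))
    rw [uIcc_of_le hab.le]
    exact ⟨hx.1.le, hx.2.le⟩

/-- The primitive of a positive function is strictly increasing. -/
theorem primitive_strictMonoOn {f : ℝ → ℝ} {a b : ℝ} (hab : a < b) (hf : ContinuousOn f (Ioo a b))
    (hfi : IntervalIntegrable f volume a b) (hf0 : ∀ x ∈ Ioo a b, 0 < f x) :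
    StrictMonoOn (fun x => ∫ r in a..x, f r) (Icc a b) := by
  obtain ⟨hc, hd⟩ := primitive_properties hab hf hfi
  refine strictMonoOn_of_deriv_pos (convex_Icc a b) hc fun x hx => ?_
  rw [interior_Icc] at hx
  rw [(hd x hx).deriv]
  exact hf0 x hx

/-- The increasing transport map between two positive densities of equal mass. -/
theorem exists_transport {f g : ℝ → ℝ} {a b c d : ℝ} (hab : a < b) (hcd : c < d)
    (hf : ContinuousOn f (Ioo a b)) (hg : ContinuousOn g (Ioo c d))
    (hf0 : ∀ x ∈ Ioo a b, 0 < f x) (hg0 : ∀ x ∈ Ioo c d, 0 < g x)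
    (hfi : IntervalIntegrable f volume a b) (hgi : IntervalIntegrable g volume c d)
    (hfg : ∫ x in a..b, f x = ∫ x in c..d, g x) :
    ∃ T : ℝ → ℝ, MapsTo T (Ioo a b) (Ioo c d) ∧ SurjOn T (Ioo a b) (Ioo c d) ∧
      ∀ x ∈ Ioo a b, HasDerivAt T (f x / g (T x)) x := by
  obtain ⟨hFc, hFd⟩ := primitive_properties hab hf hfi
  obtain ⟨hGc, hGd⟩ := primitive_properties hcd hg hgi
  have hFm := primitive_strictMonoOn hab hf hfi hf0
  have hGm := primitive_strictMonoOn hcd hg hgi hg0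
  set F : ℝ → ℝ := fun x => ∫ r in a..x, f r with hF
  set G : ℝ → ℝ := fun x => ∫ r in c..x, g r with hG
  have hFa : F a = 0 := by simp [hF]
  have hGc0 : G c = 0 := by simp [hG]
  have hGd' : G d = F b := hfg.symm
  have hFmap : ∀ x ∈ Ioo a b, F x ∈ Ioo 0 (F b) := fun x hx =>
    ⟨hFa ▸ hFm (left_mem_Icc.2 hab.le) ⟨hx.1.le, hx.2.le⟩ hx.1,
      hFm ⟨hx.1.le, hx.2.le⟩ (right_mem_Icc.2 hab.le) hx.2⟩
  have hGmap : ∀ x ∈ Ioo c d, G x ∈ Ioo 0 (F b) := fun x hx =>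
    ⟨hGc0 ▸ hGm (left_mem_Icc.2 hcd.le) ⟨hx.1.le, hx.2.le⟩ hx.1,
      hGd' ▸ hGm ⟨hx.1.le, hx.2.le⟩ (right_mem_Icc.2 hcd.le) hx.2⟩
  have hGsurj : SurjOn G (Ioo c d) (Ioo 0 (F b)) := by
    have := intermediate_value_Ioo hcd.le hGc
    rwa [hGc0, hGd'] at this
  have hFsurj : SurjOn F (Ioo a b) (Ioo 0 (F b)) := by
    have := intermediate_value_Ioo hab.le hFc
    rwa [hFa] at this
  have hGinj : InjOn G (Ioo c d) := (hGm.mono Ioo_subset_Icc_self).injOn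
  set S : ℝ → ℝ := Function.invFunOn G (Ioo c d) with hS
  have hSmem : ∀ s ∈ Ioo 0 (F b), S s ∈ Ioo c d := fun s hs =>
    Function.invFunOn_mem (hGsurj hs)
  have hGS : ∀ s ∈ Ioo 0 (F b), G (S s) = s := fun s hs => Function.invFunOn_eq (hGsurj hs)
  have hSG : ∀ y ∈ Ioo c d, S (G y) = y := fun y hy =>
    hGinj (hSmem _ (hGmap y hy)) hy (hGS _ (hGmap y hy))
  have hSm : StrictMonoOn S (Ioo 0 (F b)) := by
    intro s hs s' hs' hss
    rw [← (hGm.mono Ioo_subset_Icc_self).lt_iff_lt (hSmem s hs) (hSmem s' hs'), hGS s hs,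
      hGS s' hs']
    exact hss
  have hSimg : S '' Ioo 0 (F b) = Ioo c d := by
    refine Subset.antisymm (image_subset_iff.2 hSmem) fun y hy => ⟨G y, hGmap y hy, hSG y hy⟩
  have hSd : ∀ s ∈ Ioo 0 (F b), HasDerivAt S (g (S s))⁻¹ s := by
    intro s hs
    refine HasDerivAt.of_local_left_inverse ?_ (hGd _ (hSmem s hs)) (hg0 _ (hSmem s hs)).ne' ?_
    · refine hSm.continuousAt_of_image_mem_nhds (isOpen_Ioo.mem_nhds hs) ?_
      rw [hSimg]
      exact isOpen_Ioo.mem_nhds (hSmem s hs)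
    · filter_upwards [isOpen_Ioo.mem_nhds hs] with r hr using hGS r hr
  refine ⟨S ∘ F, fun x hx => hSmem _ (hFmap x hx), fun y hy => ?_, fun x hx => ?_⟩
  · obtain ⟨x, hx, hxy⟩ := hFsurj (hGmap y hy)
    exact ⟨x, hx, by simp [hxy, hSG y hy]⟩
  · have := (hSd _ (hFmap x hx)).comp x (hFd x hx)
    rwa [inv_mul_eq_div] at this

/-- Equality case of the Prékopa–Leindler inequality on the real line (with weight `1/2`), for
densities that are continuous and positive on an interval. -/
theorem prekopa_leindler_eq_case {f g h : ℝ → ℝ} {a b c d : ℝ} (hab : a < b) (hcd : c < d)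
    (hf : ContinuousOn f (Ioo a b)) (hg : ContinuousOn g (Ioo c d))
    (hh : ContinuousOn h (Ioo ((a + c) / 2) ((b + d) / 2)))
    (hf0 : ∀ x ∈ Ioo a b, 0 < f x) (hg0 : ∀ x ∈ Ioo c d, 0 < g x) (hh0 : ∀ x, 0 ≤ h x)
    (hfi : IntervalIntegrable f volume a b) (hgi : IntervalIntegrable g volume c d)
    (hhi : IntervalIntegrable h volume ((a + c) / 2) ((b + d) / 2))
    (hfg : ∫ x in a..b, f x = ∫ x in c..d, g x)
    (hhf : ∫ x in ((a + c) / 2)..((b + d) / 2), h x ≤ ∫ x in a..b, f x)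
    (hfgh : ∀ x ∈ Ioo a b, ∀ y ∈ Ioo c d, √(f x * g y) ≤ h ((x + y) / 2)) :
    ∃ e : ℝ, c = a + e ∧ d = b + e ∧ ∀ x ∈ Ioo a b, f x = g (x + e) := by
  obtain ⟨T, hTm, hTs, hTd⟩ := exists_transport hab hcd hf hg hf0 hg0 hfi hgi hfg
  obtain ⟨hFc, hFd⟩ := primitive_properties hab hf hfi
  obtain ⟨-, hHd⟩ := primitive_properties (by linarith) hh hhi
  set F : ℝ → ℝ := fun x => ∫ r in a..x, f r with hF
  set H : ℝ → ℝ := fun x => ∫ r in ((a + c) / 2)..x, h r with hH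
  set z : ℝ → ℝ := fun x => (x + T x) / 2 with hz
  have hzm : ∀ x ∈ Ioo a b, z x ∈ Ioo ((a + c) / 2) ((b + d) / 2) := fun x hx => by
    obtain ⟨h1, h2⟩ := hTm hx
    obtain ⟨h3, h4⟩ := hx
    constructor <;> simp only [hz] <;> linarith
  have hHm : ∀ x ∈ Ioo a b, H (z x) ∈ Icc 0 (F b) := fun x hx => by
    obtain ⟨h1, h2⟩ := hzm x hx
    refine ⟨intervalIntegral.integral_nonneg h1.le fun u _ => hh0 u, le_trans ?_ hhf⟩
    exact intervalIntegral.integral_mono_interval le_rfl h1.le h2.le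
      (Filter.Eventually.of_forall hh0) hhi
  have hΦd : ∀ x ∈ Ioo a b,
      HasDerivAt (fun x => H (z x) - F x) (h (z x) * ((1 + f x / g (T x)) / 2) - f x) x :=
    fun x hx => ((hHd _ (hzm x hx)).comp x (((hasDerivAt_id x).add (hTd x hx)).div_const 2)).sub
      (hFd x hx)
  have key : ∀ x ∈ Ioo a b,
      √(f x * g (T x)) * ((1 + f x / g (T x)) / 2) ≤ h (z x) * ((1 + f x / g (T x)) / 2) := by
    intro x hx
    have h1 := hf0 x hx
    have h2 := hg0 _ (hTm hx)
    exact mul_le_mul_of_nonneg_right (hfgh x hx _ (hTm hx)) (by positivity)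
  have amgm : ∀ p q : ℝ, 0 < p → 0 < q →
      √(p * q) * ((1 + p / q) / 2) - p = (√p - √q) ^ 2 * √p / (2 * √q) := by
    intro p q hp hq
    have hp' : 0 < √p := Real.sqrt_pos.2 hp
    have hq' : 0 < √q := Real.sqrt_pos.2 hq
    rw [Real.sqrt_mul hp.le]
    have e1 : p = √p ^ 2 := (Real.sq_sqrt hp.le).symm
    have e2 : q = √q ^ 2 := (Real.sq_sqrt hq.le).symm
    generalize √p = u at *
    generalize √q = v at *
    subst e1 e2
    field_simp
    ring
  have hmono : MonotoneOn (fun x => H (z x) - F x) (Ioo a b) := by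
    refine monotoneOn_of_deriv_nonneg (convex_Ioo a b)
      (fun x hx => (hΦd x hx).continuousAt.continuousWithinAt)
      (fun x hx => ?_) fun x hx => ?_
    · rw [interior_Ioo] at hx
      exact (hΦd x hx).differentiableAt.differentiableWithinAt
    · rw [interior_Ioo] at hx
      rw [(hΦd x hx).deriv]
      have h1 := amgm _ _ (hf0 x hx) (hg0 _ (hTm hx))
      have h2 : 0 ≤ (√(f x) - √(g (T x))) ^ 2 * √(f x) / (2 * √(g (T x))) := by positivity
      linarith [key x hx]
  have hzero : ∀ x ∈ Ioo a b, H (z x) - F x = 0 := by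
    intro x hx
    apply le_antisymm
    · have hlim : Filter.Tendsto (fun y => F b - F y) (𝓝[Ioo a b] b) (𝓝 (F b - F b)) :=
        tendsto_const_nhds.sub ((hFc b (right_mem_Icc.2 hab.le)).mono_left
          (nhdsWithin_mono _ Ioo_subset_Icc_self))
      rw [sub_self, nhdsWithin_Ioo_eq_nhdsLT hab] at hlim
      refine ge_of_tendsto hlim ?_
      filter_upwards [Ioo_mem_nhdsLT hx.2] with y hy
      have hy' : y ∈ Ioo a b := ⟨hx.1.trans hy.1, hy.2⟩
      have := hmono hx hy' hy.1.le
      have := (hHm y hy').2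
      simp only at *
      linarith
    · have hlim : Filter.Tendsto (fun y => - F y) (𝓝[Ioo a b] a) (𝓝 (- F a)) :=
        ((hFc a (left_mem_Icc.2 hab.le)).mono_left (nhdsWithin_mono _ Ioo_subset_Icc_self)).neg
      rw [nhdsWithin_Ioo_eq_nhdsGT hab] at hlim
      have hFa : F a = 0 := by simp [hF]
      rw [hFa, neg_zero] at hlim
      refine le_of_tendsto hlim ?_
      filter_upwards [Ioo_mem_nhdsGT hx.1] with y hy
      have hy' : y ∈ Ioo a b := ⟨hy.1, hy.2.trans hx.2⟩
      have := hmono hy' hx hy.2.le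
      have := (hHm y hy').1
      simp only at *
      linarith
  have hfeq : ∀ x ∈ Ioo a b, f x = g (T x) := by
    intro x hx
    have hd0 : HasDerivAt (fun x => H (z x) - F x) 0 x :=
      (hasDerivAt_const x (0 : ℝ)).congr_of_eventuallyEq
        (by filter_upwards [isOpen_Ioo.mem_nhds hx] with y hy using hzero y hy)
    have h0 := (hΦd x hx).unique hd0
    have h1 := amgm _ _ (hf0 x hx) (hg0 _ (hTm hx))
    have hp' : 0 < √(f x) := Real.sqrt_pos.2 (hf0 x hx)
    have hq' : 0 < √(g (T x)) := Real.sqrt_pos.2 (hg0 _ (hTm hx))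
    have h2 : (√(f x) - √(g (T x))) ^ 2 * √(f x) / (2 * √(g (T x))) ≤ 0 := by
      linarith [key x hx]
    have h3 : √(f x) = √(g (T x)) := by
      by_contra hne
      have : 0 < (√(f x) - √(g (T x))) ^ 2 := by
        have := sub_ne_zero.2 hne
        positivity
      have : 0 < (√(f x) - √(g (T x))) ^ 2 * √(f x) / (2 * √(g (T x))) := by positivity
      linarith
    exact (Real.sqrt_inj (hf0 x hx).le (hg0 _ (hTm hx)).le).1 h3
  obtain ⟨e, he⟩ : ∃ e, ∀ x ∈ Ioo a b, T x - x = e := by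
    refine isOpen_Ioo.exists_is_const_of_deriv_eq_zero isPreconnected_Ioo
      (fun x hx => ((hTd x hx).sub (hasDerivAt_id x)).differentiableAt.differentiableWithinAt)
      fun x hx => ?_
    refine (((hTd x hx).sub (hasDerivAt_id x)).deriv).trans ?_
    rw [hfeq x hx, div_self (hg0 _ (hTm hx)).ne']
    simp
  have hT : ∀ x ∈ Ioo a b, T x = x + e := fun x hx => by linarith [he x hx]
  have hsub1 : Ioo (a + e) (b + e) ⊆ Ioo c d := by
    intro y hy
    have hx : y - e ∈ Ioo a b := ⟨by linarith [hy.1], by linarith [hy.2]⟩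
    have := hTm hx
    rwa [hT _ hx, sub_add_cancel] at this
  have hsub2 : Ioo c d ⊆ Ioo (a + e) (b + e) := by
    intro y hy
    obtain ⟨x, hx, rfl⟩ := hTs hy
    rw [hT x hx]
    exact ⟨by linarith [hx.1], by linarith [hx.2]⟩
  rw [Ioo_subset_Ioo_iff (by linarith)] at hsub1
  rw [Ioo_subset_Ioo_iff hcd] at hsub2
  exact ⟨e, le_antisymm hsub1.1 hsub2.1, le_antisymm hsub2.2 hsub1.2,
    fun x hx => by rw [hfeq x hx, hT x hx]⟩

/-! ### Hyperplane sections -/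

/-- The parametrization of the hyperplane `⟪x, b 0⟫ = s` by `Euc d` given by an orthonormal
basis `b`. -/
def sliceMap {d : ℕ} (b : OrthonormalBasis (Fin (d + 1)) ℝ (Euc (d + 1))) (s : ℝ) (y : Euc d) :
    Euc (d + 1) :=
  b.repr.symm (WithLp.toLp 2 (Fin.cons s y.ofLp))

/-- The coordinates of the projection of `x` to the orthogonal complement of `b 0`. -/
def sliceProj {d : ℕ} (b : OrthonormalBasis (Fin (d + 1)) ℝ (Euc (d + 1))) (x : Euc (d + 1)) :
    Euc d :=
  WithLp.toLp 2 fun i => ⟪x, b i.succ⟫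

/-- The section of `S` by the hyperplane `⟪x, b 0⟫ = s`, as a subset of `Euc d`. -/
def slice {d : ℕ} (b : OrthonormalBasis (Fin (d + 1)) ℝ (Euc (d + 1))) (S : Set (Euc (d + 1)))
    (s : ℝ) : Set (Euc d) :=
  sliceMap b s ⁻¹' S

section Slices

variable {d : ℕ} (b : OrthonormalBasis (Fin (d + 1)) ℝ (Euc (d + 1)))

theorem exists_orthonormalBasis_zero_eq {u : Euc (d + 1)} (hu : ‖u‖ = 1) :
    ∃ b : OrthonormalBasis (Fin (d + 1)) ℝ (Euc (d + 1)), b 0 = u := by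
  obtain ⟨b, hb⟩ := Orthonormal.exists_orthonormalBasis_extension_of_card_eq (𝕜 := ℝ)
    (E := Euc (d + 1)) (ι := Fin (d + 1)) (by simp) (v := fun _ => u) (s := {0})
    ⟨fun i => by simpa using hu, fun i j hij => absurd (Subsingleton.elim i j) hij⟩
  exact ⟨b, hb 0 rfl⟩

theorem inner_sliceMap (s : ℝ) (y : Euc d) (x : Euc (d + 1)) :
    ⟪sliceMap b s y, x⟫ = s * ⟪b 0, x⟫ + ⟪y, sliceProj b x⟫ := by
  rw [sliceMap, ← LinearIsometryEquiv.inner_map_map b.repr, LinearIsometryEquiv.apply_symm_apply]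
  simp only [PiLp.inner_apply, Fin.sum_univ_succ, Fin.cons_zero, Fin.cons_succ, sliceProj,
    OrthonormalBasis.repr_apply_apply, RCLike.inner_apply, conj_trivial]
  simp only [mul_comm]

theorem inner_sliceMap_zero (s : ℝ) (y : Euc d) : ⟪sliceMap b s y, b 0⟫ = s := by
  have h0 : sliceProj b (b 0) = 0 := by
    ext i
    simp [sliceProj, b.inner_eq_ite, (Fin.succ_ne_zero i).symm]
  simp [inner_sliceMap, h0]

theorem sliceMap_inner_sliceProj (x : Euc (d + 1)) : sliceMap b ⟪x, b 0⟫ (sliceProj b x) = x := by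
  rw [sliceMap, LinearIsometryEquiv.symm_apply_eq]
  ext i
  refine Fin.cases ?_ (fun j => ?_) i <;>
    simp [sliceProj, OrthonormalBasis.repr_apply_apply, real_inner_comm]

theorem sliceMap_isometry (s : ℝ) : Isometry (sliceMap b s) := by
  refine b.repr.symm.isometry.comp (Isometry.of_dist_eq fun x y => ?_)
  simp [EuclideanSpace.dist_eq, Fin.sum_univ_succ]

theorem sliceMap_combo (p q s r : ℝ) (y z : Euc d) :
    sliceMap b (p * s + q * r) (p • y + q • z) = p • sliceMap b s y + q • sliceMap b r z := by
  simp only [sliceMap, ← map_smul, ← map_add]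
  congr 1
  ext i
  refine Fin.cases ?_ (fun j => ?_) i <;> simp

theorem sliceMap_measurePreserving :
    MeasurePreserving (fun p : ℝ × Euc d => sliceMap b p.1 p.2) := by
  have h1 : MeasurePreserving (fun p : ℝ × Euc d => ((p.1, p.2.ofLp) : ℝ × (Fin d → ℝ))) :=
    (MeasurePreserving.id volume).prod (PiLp.volume_preserving_ofLp (Fin d))
  have h2 : MeasurePreserving (MeasurableEquiv.piFinSuccAbove (fun _ : Fin (d + 1) => ℝ) 0).symm :=
    (volume_preserving_piFinSuccAbove (fun _ : Fin (d + 1) => ℝ) 0).symm _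
  have h3 := (b.measurePreserving_repr_symm.comp (PiLp.volume_preserving_toLp (Fin (d + 1)))).comp
    (h2.comp h1)
  refine (congrArg (fun φ => MeasurePreserving φ volume volume) (funext fun p => ?_)).mpr h3
  simp [sliceMap, MeasurableEquiv.piFinSuccAbove, Fin.insertNthEquiv]

theorem sliceProj_eq_zero {x : Euc (d + 1)} (h : sliceProj b x = 0) : x = ⟪x, b 0⟫ • b 0 := by
  have h1 := sliceMap_inner_sliceProj b x
  have h2 : sliceMap b ⟪x, b 0⟫ (0 : Euc d) = ⟪x, b 0⟫ • b 0 := by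
    refine ext_inner_right ℝ fun z => ?_
    rw [inner_sliceMap, inner_zero_left, add_zero, real_inner_smul_left]
  rw [h, h2] at h1
  exact h1.symm

theorem slice_measurableSet {S : Set (Euc (d + 1))} (hS : MeasurableSet S) (s : ℝ) :
    MeasurableSet (slice b S s) :=
  (sliceMap_isometry b s).continuous.measurable hS

theorem slice_isBounded {S : Set (Euc (d + 1))} (hS : Bornology.IsBounded S) (s : ℝ) :
    Bornology.IsBounded (slice b S s) :=
  (sliceMap_isometry b s).antilipschitz.isBounded_preimage hS

theorem sliceMap_image_slice (S : Set (Euc (d + 1))) (s : ℝ) :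
    sliceMap b s '' slice b S s = {x ∈ S | ⟪x, b 0⟫ = s} := by
  ext x
  constructor
  · rintro ⟨y, hy, rfl⟩
    exact ⟨hy, inner_sliceMap_zero b s y⟩
  · rintro ⟨hx, rfl⟩
    exact ⟨sliceProj b x, by simpa [slice, sliceMap_inner_sliceProj] using hx,
      sliceMap_inner_sliceProj b x⟩

theorem volume_eq_lintegral_slice {S : Set (Euc (d + 1))} (hS : MeasurableSet S) :
    volume S = ∫⁻ s, volume (slice b S s) := by
  have hmp := sliceMap_measurePreserving b
  rw [← hmp.measure_preimage hS.nullMeasurableSet, Measure.volume_eq_prod,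
    Measure.prod_apply (hmp.measurable hS)]
  rfl

theorem measurable_volume_slice {S : Set (Euc (d + 1))} (hS : MeasurableSet S) :
    Measurable fun s => volume (slice b S s) :=
  measurable_measure_prodMk_left ((sliceMap_measurePreserving b).measurable hS)

theorem integrable_volume_slice {S : Set (Euc (d + 1))} (hS : MeasurableSet S)
    (hb : volume S ≠ ∞) : Integrable fun s => (volume (slice b S s)).toReal :=
  integrable_toReal_of_lintegral_ne_top (measurable_volume_slice b hS).aemeasurable
    (by rwa [← volume_eq_lintegral_slice b hS])

theorem toReal_volume_eq_integral_slice {S : Set (Euc (d + 1))} (hS : MeasurableSet S)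
    (hb : Bornology.IsBounded S) :
    (volume S).toReal = ∫ s, (volume (slice b S s)).toReal := by
  rw [volume_eq_lintegral_slice b hS, integral_toReal (measurable_volume_slice b hS).aemeasurable]
  exact Filter.Eventually.of_forall fun s => (slice_isBounded b hb s).measure_lt_top

/-- Fubini's theorem for the first moment in the direction `b 0`. -/
theorem setIntegral_inner_eq_integral_slice {S : Set (Euc (d + 1))} (hS : IsCompact S) :
    ∫ x in S, ⟪x, b 0⟫ = ∫ s, s * (volume (slice b S s)).toReal := by
  have hmp := sliceMap_measurePreserving b
  have hSm := hS.measurableSet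
  have hint : Integrable (S.indicator fun x : Euc (d + 1) => ⟪x, b 0⟫) := by
    rw [integrable_indicator_iff hSm]
    exact (Continuous.continuousOn (by fun_prop)).integrableOn_compact hS
  rw [← integral_indicator hSm, ← hmp.map_eq,
    integral_map hmp.measurable.aemeasurable (hmp.map_eq.symm ▸ hint.aestronglyMeasurable),
    Measure.volume_eq_prod]
  refine (integral_prod _ (hmp.integrable_comp_of_integrable hint)).trans ?_
  refine integral_congr_ae (Filter.Eventually.of_forall fun s => ?_)
  have : (fun y => S.indicator (fun x : Euc (d + 1) => ⟪x, b 0⟫) (sliceMap b s y)) =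
      (slice b S s).indicator fun _ => s := by
    ext y
    by_cases hy : sliceMap b s y ∈ S
    · rw [indicator_of_mem hy, indicator_of_mem (show y ∈ slice b S s from hy),
        inner_sliceMap_zero]
    · rw [indicator_of_notMem hy, indicator_of_notMem (show y ∉ slice b S s from hy)]
  simp only [Function.comp_apply, this]
  rw [integral_indicator (slice_measurableSet b hSm s), setIntegral_const]
  simp [Measure.real, mul_comm]

/-- The `d`-dimensional Hausdorff measure of a hyperplane section is a fixed multiple of its
Lebesgue measure. -/
theorem exists_hausdorffMeasure_section_eq (d : ℕ) : ∃ c : ℝ, 0 < c ∧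
    ∀ (b : OrthonormalBasis (Fin (d + 1)) ℝ (Euc (d + 1))) (S : Set (Euc (d + 1))) (s : ℝ),
      μH[((d + 1 : ℕ) : ℝ) - 1] {x ∈ S | ⟪x, b 0⟫ = s} =
        ENNReal.ofReal c * volume (slice b S s) := by
  have hH : (μH[(d : ℝ)] : Measure (Euc d)).IsAddHaarMeasure := by
    simpa using isAddHaarMeasure_hausdorffMeasure (E := Euc d)
  have hc := Measure.isAddLeftInvariant_eq_smul (μH[(d : ℝ)] : Measure (Euc d)) volume
  set c := Measure.addHaarScalarFactor (μH[(d : ℝ)] : Measure (Euc d)) volume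
  have hc0 : 0 < c := Measure.addHaarScalarFactor_pos_of_isAddHaarMeasure _ _
  refine ⟨c, hc0, fun b S s => ?_⟩
  have hd : (((d + 1 : ℕ) : ℝ) - 1) = d := by push_cast; ring
  rw [← sliceMap_image_slice, hd,
    (sliceMap_isometry b s).hausdorffMeasure_image (Or.inl (by positivity)), hc,
    ENNReal.ofReal_coe_nnreal]
  rfl

end Slices

/-! ### Polyhedra with prescribed normals -/

/-- The polyhedron with normals `n` and support numbers `h`. -/
def polyhedron {m : ℕ} {ι : Type*} (n : ι → Euc m) (h : ι → ℝ) : Set (Euc m) :=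
  {x | ∀ i, ⟪x, n i⟫ ≤ h i}

/-- The open polyhedron with normals `n` and support numbers `h`. -/
def openPolyhedron {m : ℕ} {ι : Type*} (n : ι → Euc m) (h : ι → ℝ) : Set (Euc m) :=
  {x | ∀ i, ⟪x, n i⟫ < h i}

/-- The volume of the polyhedron with normals `n` and support numbers `h`. -/
def polyVol {m : ℕ} {ι : Type*} (n : ι → Euc m) (h : ι → ℝ) : ℝ :=
  (volume (polyhedron n h)).toReal

/-- Every direction has a component along some `n j`, in a uniform way. -/
def PositivelySpans {m : ℕ} {ι : Type*} (n : ι → Euc m) : Prop :=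
  ∃ c > 0, ∀ x, ∃ j, c * ‖x‖ ≤ ⟪x, n j⟫

section Polyhedron

variable {m : ℕ} {ι : Type*} {n : ι → Euc m} {h q : ι → ℝ}

theorem mem_polyhedron {x : Euc m} : x ∈ polyhedron n h ↔ ∀ i, ⟪x, n i⟫ ≤ h i := Iff.rfl

theorem mem_openPolyhedron {x : Euc m} : x ∈ openPolyhedron n h ↔ ∀ i, ⟪x, n i⟫ < h i := Iff.rfl

theorem openPolyhedron_subset : openPolyhedron n h ⊆ polyhedron n h := fun _ hx i => (hx i).le

theorem polyhedron_isClosed : IsClosed (polyhedron n h) := by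
  have : polyhedron n h = ⋂ i, {x | ⟪x, n i⟫ ≤ h i} := by
    ext x
    simp [mem_polyhedron]
  rw [this]
  exact isClosed_iInter fun i => isClosed_le (by fun_prop) continuous_const

theorem openPolyhedron_isOpen [Finite ι] : IsOpen (openPolyhedron n h) := by
  have : openPolyhedron n h = ⋂ i, {x | ⟪x, n i⟫ < h i} := by
    ext x
    simp [mem_openPolyhedron]
  rw [this]
  exact isOpen_iInter_of_finite fun i => isOpen_lt (by fun_prop) continuous_const

theorem polyhedron_combo {t : ℝ} (ht0 : 0 ≤ t) (ht1 : t ≤ 1) {x y : Euc m}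
    (hx : x ∈ polyhedron n h) (hy : y ∈ polyhedron n q) :
    (1 - t) • x + t • y ∈ polyhedron n ((1 - t) • h + t • q) := by
  intro i
  rw [inner_add_left, real_inner_smul_left, real_inner_smul_left]
  exact add_le_add (mul_le_mul_of_nonneg_left (hx i) (by linarith))
    (mul_le_mul_of_nonneg_left (hy i) ht0)

theorem polyhedron_convex : Convex ℝ (polyhedron n h) := by
  intro x hx y hy p r hp hr hpr i
  rw [inner_add_left, real_inner_smul_left, real_inner_smul_left]
  calc p * ⟪x, n i⟫ + r * ⟪y, n i⟫ ≤ p * h i + r * h i :=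
        add_le_add (mul_le_mul_of_nonneg_left (hx i) hp) (mul_le_mul_of_nonneg_left (hy i) hr)
    _ = h i := by rw [← add_mul, hpr, one_mul]

theorem inner_lt_of_mem_interior_polyhedron {i : ι} (hi : n i ≠ 0) {x : Euc m}
    (hx : x ∈ interior (polyhedron n h)) : ⟪x, n i⟫ < h i := by
  have hlim : Filter.Tendsto (fun t : ℝ => x + t • n i) (𝓝 0) (𝓝 x) := by
    have : Continuous fun t : ℝ => x + t • n i := by fun_prop
    simpa using this.tendsto 0
  have hev : ∀ᶠ t in 𝓝[>] (0 : ℝ), x + t • n i ∈ polyhedron n h :=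
    (hlim.eventually (mem_interior_iff_mem_nhds.1 hx)).filter_mono nhdsWithin_le_nhds
  obtain ⟨t, ht, ht0⟩ := (hev.and self_mem_nhdsWithin).exists
  have h1 := ht i
  rw [inner_add_left, real_inner_smul_left, real_inner_self_eq_norm_sq] at h1
  have h2 : 0 < t * ‖n i‖ ^ 2 := mul_pos ht0 (pow_pos (norm_pos_iff.2 hi) 2)
  linarith

theorem polyhedron_interior_subset (hn : ∀ i, n i ≠ 0) :
    interior (polyhedron n h) ⊆ openPolyhedron n h :=
  fun _ hx i => inner_lt_of_mem_interior_polyhedron (hn i) hx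

theorem polyhedron_isBounded [Finite ι] (hps : PositivelySpans n) :
    Bornology.IsBounded (polyhedron n h) := by
  obtain ⟨c, hc, hcn⟩ := hps
  obtain ⟨R, hR⟩ := (Set.finite_range h).bddAbove
  refine (Metric.isBounded_closedBall (x := (0 : Euc m)) (r := R / c)).subset fun x hx => ?_
  obtain ⟨j, hj⟩ := hcn x
  rw [mem_closedBall_zero_iff, le_div_iff₀ hc, mul_comm]
  exact hj.trans ((hx j).trans (hR ⟨j, rfl⟩))

theorem polyhedron_isCompact [Finite ι] (hps : PositivelySpans n) : IsCompact (polyhedron n h) :=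
  Metric.isCompact_of_isClosed_isBounded polyhedron_isClosed (polyhedron_isBounded hps)

theorem volume_eq_zero_of_interior_eq_empty {P : Set (Euc m)} (hP : Convex ℝ P)
    (hint : interior P = ∅) : volume P = 0 :=
  measure_mono_null (t := frontier P) (fun _ hx => ⟨subset_closure hx, by simp [hint]⟩)
    (hP.addHaar_frontier volume)

theorem openPolyhedron_nonempty_of_polyVol_pos (hn : ∀ i, n i ≠ 0) (hV : 0 < polyVol n h) :
    (openPolyhedron n h).Nonempty := by
  by_contra hne
  have hint : interior (polyhedron n h) = ∅ := by
    rw [← Set.not_nonempty_iff_eq_empty]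
    exact fun hx => hne (hx.mono (polyhedron_interior_subset hn))
  have h0 := volume_eq_zero_of_interior_eq_empty polyhedron_convex hint
  simp [polyVol, h0] at hV

theorem polyVol_pos [Finite ι] (hps : PositivelySpans n) (hne : (openPolyhedron n h).Nonempty) :
    0 < polyVol n h :=
  ENNReal.toReal_pos
    (((openPolyhedron_isOpen.measure_pos volume hne).trans_le
      (measure_mono openPolyhedron_subset)).ne')
    (polyhedron_isBounded hps).measure_lt_top.ne

theorem polyhedron_smul {t : ℝ} (ht : 0 < t) : polyhedron n (t • h) = t • polyhedron n h := by
  ext x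
  rw [Set.mem_smul_set_iff_inv_smul_mem₀ ht.ne']
  simp only [mem_polyhedron, real_inner_smul_left, Pi.smul_apply, smul_eq_mul, inv_mul_le_iff₀ ht]

theorem polyVol_smul {t : ℝ} (ht : 0 < t) : polyVol n (t • h) = t ^ m * polyVol n h := by
  rw [polyVol, polyhedron_smul ht, Measure.addHaar_smul, ENNReal.toReal_mul]
  simp [abs_of_pos ht, polyVol, ht.le]

theorem polyhedron_translate (v : Euc m) :
    polyhedron n (h + fun i => ⟪v, n i⟫) = v +ᵥ polyhedron n h := by
  ext x
  rw [Set.mem_vadd_set_iff_neg_vadd_mem]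
  simp only [mem_polyhedron, vadd_eq_add, Pi.add_apply, inner_add_left, inner_neg_left]
  exact forall_congr' fun i => by constructor <;> intro hx <;> linarith

/-- The volume of a polyhedron depends continuously on the support numbers. -/
theorem continuousAt_polyVol [Fintype ι] {X : Type*} [TopologicalSpace X]
    [FirstCountableTopology X] {c : X → ι → ℝ} {x₀ : X}
    (hc : ∀ i, ContinuousAt (fun x => c x i) x₀)
    (hdeg : ∀ i, n i = 0 → c x₀ i ≠ 0 ∨ ∀ x, c x i = 0)
    (hbd : ∃ R, ∀ᶠ x in 𝓝 x₀, polyhedron n (c x) ⊆ Metric.closedBall 0 R) :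
    ContinuousAt (fun x => polyVol n (c x)) x₀ := by
  obtain ⟨R, hR⟩ := hbd
  have hfin : volume (polyhedron n (c x₀)) ≠ ∞ :=
    ((measure_mono hR.self_of_nhds).trans_lt measure_closedBall_lt_top).ne
  refine (ENNReal.tendsto_toReal hfin).comp ?_
  refine tendsto_measure_of_ae_tendsto_indicator (𝓝 x₀) polyhedron_isClosed.measurableSet
    (fun x => polyhedron_isClosed.measurableSet) Metric.isClosed_closedBall.measurableSet
    measure_closedBall_lt_top.ne hR ?_
  have hae : ∀ i, ∀ᵐ y : Euc m, n i ≠ 0 → ⟪y, n i⟫ ≠ c x₀ i := by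
    intro i
    by_cases hi : n i = 0
    · simp [hi]
    have hnull : volume {y : Euc m | ⟪y, n i⟫ = c x₀ i} = 0 := by
      have hcv : Convex ℝ {y : Euc m | ⟪y, n i⟫ ≤ c x₀ i} := by
        have := polyhedron_convex (n := fun _ : Unit => n i) (h := fun _ => c x₀ i)
        simpa [polyhedron] using this
      refine measure_mono_null (fun y hy => ?_) (hcv.addHaar_frontier volume)
      refine ⟨subset_closure (le_of_eq hy), fun hy' => ?_⟩
      have h1 : y ∈ openPolyhedron (fun _ : Unit => n i) (fun _ => c x₀ i) := by
        refine polyhedron_interior_subset (fun _ => hi) ?_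
        simpa [polyhedron] using hy'
      exact (h1 ()).ne hy
    filter_upwards [measure_eq_zero_iff_ae_notMem.1 hnull] with y hy _ using hy
  filter_upwards [ae_all_iff.2 hae] with y hy
  have hev : ∀ i, ∀ᶠ x in 𝓝 x₀, (⟪y, n i⟫ ≤ c x i ↔ ⟪y, n i⟫ ≤ c x₀ i) := by
    intro i
    have main : ⟪y, n i⟫ ≠ c x₀ i → ∀ᶠ x in 𝓝 x₀, (⟪y, n i⟫ ≤ c x i ↔ ⟪y, n i⟫ ≤ c x₀ i) := by
      intro hne
      rcases hne.lt_or_gt with hlt | hgt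
      · filter_upwards [(hc i).eventually (lt_mem_nhds hlt)] with x hx
        exact iff_of_true (le_of_lt hx) hlt.le
      · filter_upwards [(hc i).eventually (gt_mem_nhds hgt)] with x hx
        exact iff_of_false (not_le.2 hx) (not_le.2 hgt)
    by_cases hi : n i = 0
    · rcases hdeg i hi with h0 | h0
      · exact main (by rw [hi, inner_zero_right]; exact h0.symm)
      · simp [h0]
    · exact main (hy i hi)
  filter_upwards [Filter.eventually_all.2 hev] with x hx
  exact forall_congr' hx

theorem polyVol_continuous [Fintype ι] (hn : ∀ i, n i ≠ 0) (hps : PositivelySpans n) :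
    Continuous (polyVol n) := by
  refine continuous_iff_continuousAt.2 fun h => ?_
  refine continuousAt_polyVol (c := id) (fun i => (continuous_apply i).continuousAt)
    (fun i hi => absurd hi (hn i)) ?_
  obtain ⟨R, hR⟩ := (polyhedron_isBounded (h := h + 1) hps).subset_closedBall 0
  refine ⟨R, ?_⟩
  have : ∀ i, ∀ᶠ q : ι → ℝ in 𝓝 h, q i ≤ h i + 1 := fun i =>
    (((continuous_apply i).tendsto h).eventually (gt_mem_nhds (lt_add_one (h i)))).mono
      fun q hq => le_of_lt hq
  filter_upwards [Filter.eventually_all.2 this] with q hq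
  exact fun x hx => hR fun i => (hx i).trans (hq i)

/-- Quasi-concavity of the volume in the support numbers. -/
theorem polyVol_le_polyVol_combo [Finite ι] (hps : PositivelySpans n) {t : ℝ} (ht0 : 0 < t)
    (ht1 : t < 1) (hpos : 0 < polyVol n h) (hle : polyVol n h ≤ polyVol n q) :
    polyVol n h ≤ polyVol n ((1 - t) • h + t • q) := by
  have hb : ∀ p : ι → ℝ, Bornology.IsBounded (polyhedron n p) := fun p => polyhedron_isBounded hps
  have hbm := brunn_minkowski_euclidean ht0 ht1
    (polyhedron_isClosed (n := n) (h := h)).measurableSet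
    (polyhedron_isClosed (n := n) (h := q)).measurableSet
    (polyhedron_isClosed (n := n) (h := (1 - t) • h + t • q)).measurableSet (hb _) (hb _) (hb _)
    fun x hx y hy => polyhedron_combo ht0.le ht1.le hx hy
  have h2 := ENNReal.toReal_mono (hb _).measure_lt_top.ne hbm
  rw [ENNReal.toReal_mul, ← ENNReal.toReal_rpow, ← ENNReal.toReal_rpow] at h2
  refine le_trans ?_ h2
  calc polyVol n h = polyVol n h ^ (1 - t) * polyVol n h ^ t := by
        rw [← Real.rpow_add hpos]; simp
    _ ≤ polyVol n h ^ (1 - t) * polyVol n q ^ t := by gcongr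

end Polyhedron

/-! ### Derivative of the volume -/

/-- A function with continuous partial derivatives has directional derivatives given by the
gradient. -/
theorem hasDerivAt_of_partials {ι : Type*} [Fintype ι] [DecidableEq ι] {V : (ι → ℝ) → ℝ}
    {A : ι → (ι → ℝ) → ℝ} {h : ι → ℝ}
    (hV : ∀ᶠ p in 𝓝 h, ∀ j, HasDerivAt (fun s => V (Function.update p j s)) (A j p) (p j))
    (hA : ∀ j, ContinuousAt (A j) h) (δ : ι → ℝ) :
    HasDerivAt (fun t : ℝ => V (h + t • δ)) (∑ j, δ j * A j h) 0 := by
  set D : Finset ι → ι → ℝ := fun s i => if i ∈ s then δ i else 0 with hD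
  have key : ∀ s : Finset ι,
      HasDerivAt (fun t : ℝ => V (h + t • D s)) (∑ j ∈ s, δ j * A j h) 0 := by
    intro s
    induction s using Finset.induction_on with
    | empty =>
      have : D ∅ = 0 := by ext i; simp [hD]
      simpa [this] using hasDerivAt_const (0 : ℝ) (V h)
    | insert j s hj ih =>
      rw [Finset.sum_insert hj]
      suffices hdiff : HasDerivAt (fun t : ℝ => V (h + t • D (insert j s)) - V (h + t • D s))
          (δ j * A j h) 0 by
        exact (hdiff.add ih).congr_of_eventuallyEq (.of_forall fun t => by simp)
      have hDj : D s j = 0 := by simp [hD, hj]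
      have hupd : ∀ t : ℝ, h + t • D (insert j s) =
          Function.update (h + t • D s) j (h j + t * δ j) := by
        intro t
        ext i
        by_cases hi : i = j
        · subst hi; simp [hD]
        · simp [hD, hi]
      have hupd0 : ∀ t : ℝ, h + t • D s = Function.update (h + t • D s) j (h j) := by
        intro t
        rw [eq_comm, Function.update_eq_self_iff]
        simp [hDj]
      rw [hasDerivAt_iff_isLittleO, Asymptotics.isLittleO_iff]
      intro ε hε
      set C := ‖δ‖ + 1 with hC
      have hC0 : 0 < C := by positivity
      have hnear : ∀ᶠ p in 𝓝 h, (∀ j, HasDerivAt (fun s => V (Function.update p j s)) (A j p) (p j))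
          ∧ dist (A j p) (A j h) < ε / C :=
        hV.and ((hA j).eventually (Metric.ball_mem_nhds _ (by positivity)))
      obtain ⟨ρ, hρ, hball⟩ := Metric.eventually_nhds_iff.1 hnear
      filter_upwards [Metric.ball_mem_nhds (0 : ℝ) (show 0 < ρ / C by positivity)] with t ht
      rw [mem_ball_zero_iff, Real.norm_eq_abs, lt_div_iff₀ hC0] at ht
      have hδ : ∀ i, |δ i| ≤ C := fun i => (norm_le_pi_norm δ i).trans (by simp [hC])
      have hmem : ∀ r ∈ uIcc (h j) (h j + t * δ j),
          dist (Function.update (h + t • D s) j r) h < ρ := by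
        intro r hr
        rw [dist_pi_lt_iff hρ]
        intro i
        by_cases hi : i = j
        · subst hi
          rw [Function.update_self, Real.dist_eq]
          have h1 := abs_sub_left_of_mem_uIcc hr
          rw [add_sub_cancel_left, abs_mul] at h1
          calc |r - h i| ≤ |t| * |δ i| := h1
            _ ≤ |t| * C := by gcongr; exact hδ i
            _ < ρ := ht
        · rw [Function.update_of_ne hi, Real.dist_eq]
          simp only [Pi.add_apply, Pi.smul_apply, smul_eq_mul, add_sub_cancel_left, abs_mul]
          refine lt_of_le_of_lt (mul_le_mul_of_nonneg_left ?_ (abs_nonneg t)) ht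
          by_cases his : i ∈ s
          · simpa [hD, his] using hδ i
          · simpa [hD, his] using hC0.le
      have hder : ∀ r ∈ uIcc (h j) (h j + t * δ j), HasDerivWithinAt
          (fun r => V (Function.update (h + t • D s) j r) - r * A j h)
          (A j (Function.update (h + t • D s) j r) - A j h) (uIcc (h j) (h j + t * δ j)) r := by
        intro r hr
        have h1 := (hball (hmem r hr)).1 j
        simp only [Function.update_idem, Function.update_self] at h1
        have h2 := h1.sub ((hasDerivAt_id r).mul_const (A j h))
        rw [one_mul] at h2
        exact h2.hasDerivWithinAt
      have hmv := (convex_uIcc (h j) (h j + t * δ j)).norm_image_sub_le_of_norm_hasDerivWithin_le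
        hder (fun r hr => (hball (hmem r hr)).2.le) left_mem_uIcc right_mem_uIcc
      have e1 : V (h + t • D (insert j s)) - V (h + t • D s) -
          (V (h + (0 : ℝ) • D (insert j s)) - V (h + (0 : ℝ) • D s)) - (t - 0) • (δ j * A j h) =
          (V (Function.update (h + t • D s) j (h j + t * δ j)) - (h j + t * δ j) * A j h) -
          (V (Function.update (h + t • D s) j (h j)) - h j * A j h) := by
        rw [hupd t, ← hupd0 t]
        simp only [zero_smul, add_zero, sub_self, sub_zero, smul_eq_mul]
        ring
      rw [e1]
      refine hmv.trans ?_
      rw [add_sub_cancel_left, norm_mul, sub_zero, Real.norm_eq_abs, Real.norm_eq_abs]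
      calc ε / C * (|t| * |δ j|) ≤ ε / C * (|t| * C) := by gcongr; exact hδ j
        _ = ε * |t| := by field_simp
  have := key Finset.univ
  have hDu : D Finset.univ = δ := by ext i; simp [hD]
  rwa [hDu] at this

section FacetVolume

variable {d : ℕ} {ι : Type*} {n : ι → Euc (d + 1)} {h q : ι → ℝ}

/-- The `d`-dimensional volume of a slice of a polyhedron. -/
def sliceVol (b : OrthonormalBasis (Fin (d + 1)) ℝ (Euc (d + 1))) (n : ι → Euc (d + 1))
    (h : ι → ℝ) (s : ℝ) : ℝ :=
  (volume (slice b (polyhedron n h) s)).toReal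

theorem slice_polyhedron (b : OrthonormalBasis (Fin (d + 1)) ℝ (Euc (d + 1))) (s : ℝ) :
    slice b (polyhedron n h) s =
      polyhedron (fun i => sliceProj b (n i)) (fun i => h i - s * ⟪b 0, n i⟫) := by
  ext y
  simp only [slice, mem_preimage, mem_polyhedron, inner_sliceMap]
  exact forall_congr' fun i => by constructor <;> intro hx <;> linarith

theorem sliceVol_eq_polyVol (b : OrthonormalBasis (Fin (d + 1)) ℝ (Euc (d + 1))) (s : ℝ) :
    sliceVol b n h s =
      polyVol (fun i => sliceProj b (n i)) (fun i => h i - s * ⟪b 0, n i⟫) := by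
  rw [sliceVol, slice_polyhedron, polyVol]

theorem norm_le_two_mul_norm_sliceMap (b : OrthonormalBasis (Fin (d + 1)) ℝ (Euc (d + 1)))
    (s : ℝ) (y : Euc d) : ‖y‖ ≤ 2 * ‖sliceMap b s y‖ := by
  have hs : ∀ z : Euc d, |s| ≤ ‖sliceMap b s z‖ := fun z => by
    have := abs_real_inner_le_norm (sliceMap b s z) (b 0)
    rwa [inner_sliceMap_zero, b.orthonormal.1, mul_one] at this
  have h0 : ‖sliceMap b s 0‖ = |s| := by
    have h1 := real_inner_self_eq_norm_sq (sliceMap b s 0)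
    rw [inner_sliceMap, inner_zero_left, add_zero, real_inner_comm, inner_sliceMap_zero] at h1
    rw [← abs_norm, ← sq_eq_sq_iff_abs_eq_abs]
    linarith
  have h1 : ‖y‖ = ‖sliceMap b s y - sliceMap b s 0‖ := by
    rw [← dist_eq_norm, (sliceMap_isometry b s).dist_eq, dist_zero_right]
  have h2 := norm_sub_le (sliceMap b s y) (sliceMap b s 0)
  linarith [hs y]

/-- A unit vector that projects to zero is `b 0` or its opposite. -/
theorem eq_or_eq_neg_of_sliceProj_eq_zero (b : OrthonormalBasis (Fin (d + 1)) ℝ (Euc (d + 1)))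
    {x : Euc (d + 1)} (hx : ‖x‖ = 1) (h0 : sliceProj b x = 0) : x = b 0 ∨ x = -b 0 := by
  have h1 := sliceProj_eq_zero b h0
  have h2 : |⟪x, b 0⟫| = 1 := by
    have := congrArg norm h1
    rwa [norm_smul, b.orthonormal.1, mul_one, hx, Real.norm_eq_abs, eq_comm] at this
  rcases abs_eq (zero_le_one' ℝ) |>.1 h2 with h3 | h3
  · left; rw [h1, h3, one_smul]
  · right; rw [h1, h3, neg_one_smul]

theorem continuousAt_sliceVol [Fintype ι] (hps : PositivelySpans n)
    (b : OrthonormalBasis (Fin (d + 1)) ℝ (Euc (d + 1))) {X : Type*} [TopologicalSpace X]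
    [FirstCountableTopology X] {p : X → ι → ℝ} {s : X → ℝ} {x₀ : X} (hp : ContinuousAt p x₀)
    (hs : ContinuousAt s x₀)
    (hdeg : ∀ i, sliceProj b (n i) = 0 →
      p x₀ i - s x₀ * ⟪b 0, n i⟫ ≠ 0 ∨ ∀ x, p x i - s x * ⟪b 0, n i⟫ = 0) :
    ContinuousAt (fun x => sliceVol b n (p x) (s x)) x₀ := by
  simp only [sliceVol_eq_polyVol]
  have hpi : ∀ i, ContinuousAt (fun x => p x i) x₀ := fun i =>
    (continuous_apply i).continuousAt.comp hp
  refine continuousAt_polyVol (fun i => (hpi i).sub (hs.mul_const _)) hdeg ?_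
  obtain ⟨R, hR⟩ := (polyhedron_isBounded (h := p x₀ + 1) hps).subset_closedBall 0
  refine ⟨2 * R, ?_⟩
  have hev : ∀ i, ∀ᶠ x in 𝓝 x₀, p x i ≤ p x₀ i + 1 := fun i =>
    ((hpi i).eventually (gt_mem_nhds (lt_add_one (p x₀ i)))).mono fun x hx => le_of_lt hx
  filter_upwards [Filter.eventually_all.2 hev] with x hx y hy
  rw [← slice_polyhedron] at hy
  have h1 := hR (fun i => (hy i).trans (hx i) : sliceMap b (s x) y ∈ polyhedron n (p x₀ + 1))
  rw [mem_closedBall_zero_iff] at h1 ⊢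
  linarith [norm_le_two_mul_norm_sliceMap b (s x) y]

/-- The volume of the slice of a polyhedron by the `j`-th supporting hyperplane. -/
def facetVol (b : ι → OrthonormalBasis (Fin (d + 1)) ℝ (Euc (d + 1))) (n : ι → Euc (d + 1))
    (j : ι) (h : ι → ℝ) : ℝ :=
  sliceVol (b j) n h (h j)

theorem add_pos_of_openPolyhedron_nonempty (hne : (openPolyhedron n h).Nonempty) {i j : ι}
    (hij : n i = -n j) : 0 < h i + h j := by
  obtain ⟨x, hx⟩ := hne
  have h1 := hx i
  have h2 := hx j
  rw [hij, inner_neg_right] at h1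
  linarith

theorem eventually_openPolyhedron_nonempty [Finite ι] (hne : (openPolyhedron n h).Nonempty) :
    ∀ᶠ p in 𝓝 h, (openPolyhedron n p).Nonempty := by
  obtain ⟨x, hx⟩ := hne
  have : ∀ i, ∀ᶠ p : ι → ℝ in 𝓝 h, ⟪x, n i⟫ < p i := fun i =>
    ((continuous_apply i).tendsto h).eventually (lt_mem_nhds (hx i))
  filter_upwards [Filter.eventually_all.2 this] with p hp using ⟨x, hp⟩

theorem facetVol_smul {b : ι → OrthonormalBasis (Fin (d + 1)) ℝ (Euc (d + 1))}
    {t : ℝ} (ht : 0 < t) (j : ι) (h : ι → ℝ) :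
    facetVol b n j (t • h) = t ^ d * facetVol b n j h := by
  rw [facetVol, facetVol, sliceVol_eq_polyVol, sliceVol_eq_polyVol, ← polyVol_smul ht]
  congr 1
  ext i
  simp only [Pi.smul_apply, smul_eq_mul]
  ring

variable [Fintype ι] {b : ι → OrthonormalBasis (Fin (d + 1)) ℝ (Euc (d + 1))}

theorem continuousAt_facetVol (hn : ∀ i, ‖n i‖ = 1) (hinj : Function.Injective n)
    (hps : PositivelySpans n) (hb : ∀ i, b i 0 = n i) (hne : (openPolyhedron n h).Nonempty)
    (j : ι) : ContinuousAt (facetVol b n j) h := by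
  refine continuousAt_sliceVol (p := id) hps (b j) continuousAt_id
    (continuous_apply j).continuousAt fun i hi => ?_
  rcases eq_or_eq_neg_of_sliceProj_eq_zero (b j) (hn i) hi with h1 | h1
  · right
    intro p
    rw [hb] at h1
    obtain rfl := hinj h1
    simp [hb, hn]
  · left
    rw [hb] at h1 ⊢
    have := add_pos_of_openPolyhedron_nonempty hne h1
    rw [h1, inner_neg_right, real_inner_self_eq_norm_sq, hn]
    simp only [id_eq]
    intro h2
    linarith

/-- The partial derivatives of the volume are the facet volumes. -/
theorem hasDerivAt_polyVol_update [DecidableEq ι] (hn : ∀ i, ‖n i‖ = 1)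
    (hinj : Function.Injective n)
    (hps : PositivelySpans n) (hb : ∀ i, b i 0 = n i) (hne : (openPolyhedron n h).Nonempty)
    (j : ι) : HasDerivAt (fun s => polyVol n (Function.update h j s)) (facetVol b n j h) (h j) := by
  set S := h j + 1 with hS
  set g : ℝ → ℝ := fun r => sliceVol (b j) n (Function.update h j S) r with hg
  have hmeas : ∀ p : ι → ℝ, MeasurableSet (polyhedron n p) := fun p =>
    polyhedron_isClosed.measurableSet
  have hbd : ∀ p : ι → ℝ, Bornology.IsBounded (polyhedron n p) := fun p => polyhedron_isBounded hps
  have hgi : Integrable g :=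
    integrable_volume_slice (b j) (hmeas _) (hbd _).measure_lt_top.ne
  have hslice : ∀ s ≤ S, ∀ r, sliceVol (b j) n (Function.update h j s) r =
      (Iic s).indicator g r := by
    intro s hs r
    have hmem : ∀ p : ι → ℝ, ∀ y, y ∈ slice (b j) (polyhedron n p) r →
        r ≤ p j := by
      intro p y hy
      have := hy j
      rwa [← hb, inner_sliceMap_zero] at this
    by_cases hr : r ≤ s
    · rw [indicator_of_mem (by exact hr), hg]
      simp only [sliceVol]
      congr 2
      ext y
      refine forall_congr' fun i => ?_
      by_cases hi : i = j
      · subst hi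
        rw [Function.update_self, Function.update_self, ← hb, inner_sliceMap_zero]
        exact iff_of_true hr (hr.trans hs)
      · rw [Function.update_of_ne hi, Function.update_of_ne hi]
    · rw [indicator_of_notMem (by exact hr), sliceVol]
      have : slice (b j) (polyhedron n (Function.update h j s)) r = ∅ := by
        rw [eq_empty_iff_forall_notMem]
        intro y hy
        exact hr (by simpa using hmem _ y hy)
      simp [this]
  have hV : ∀ s ≤ S, polyVol n (Function.update h j s) = ∫ r in Iic s, g r := by
    intro s hs
    rw [polyVol, toReal_volume_eq_integral_slice (b j) (hmeas _) (hbd _),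
      ← integral_indicator measurableSet_Iic]
    exact integral_congr_ae (.of_forall (hslice s hs))
  have hcont : ContinuousAt g (h j) := by
    refine continuousAt_sliceVol (p := fun _ => Function.update h j S) hps (b j)
      continuousAt_const continuousAt_id fun i hi => Or.inl ?_
    rcases eq_or_eq_neg_of_sliceProj_eq_zero (b j) (hn i) hi with h1 | h1
    · rw [hb] at h1
      obtain rfl := hinj h1
      simp [hb, hn, hS]
    · rw [hb] at h1 ⊢
      have h2 := add_pos_of_openPolyhedron_nonempty hne h1
      have hij : i ≠ j := by
        rintro rfl
        have h3 := congrArg (fun x => ⟪n i, x⟫) h1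
        simp only [inner_neg_right, real_inner_self_eq_norm_sq, hn] at h3
        norm_num at h3
      rw [h1, inner_neg_right, real_inner_self_eq_norm_sq, hn, Function.update_of_ne hij]
      intro h3
      linarith [show id (h j) = h j from rfl]
  have hval : facetVol b n j h = g (h j) := by
    have := hslice (h j) (by linarith) (h j)
    rwa [Function.update_eq_self, indicator_of_mem self_mem_Iic] at this
  have hFTC : HasDerivAt (fun s => ∫ r in (h j)..s, g r) (g (h j)) (h j) :=
    intervalIntegral.integral_hasDerivAt_right (by simp)
      (hgi.aestronglyMeasurable.stronglyMeasurableAtFilter) hcont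
  rw [hval]
  refine (hFTC.const_add (∫ r in Iic (h j), g r)).congr_of_eventuallyEq ?_
  filter_upwards [Iio_mem_nhds (show h j < S by linarith)] with s hs
  rw [hV s (le_of_lt hs),
    ← intervalIntegral.integral_Iic_sub_Iic hgi.integrableOn hgi.integrableOn]
  ring

theorem hasDerivAt_polyVol (hn : ∀ i, ‖n i‖ = 1)
    (hinj : Function.Injective n)
    (hps : PositivelySpans n) (hb : ∀ i, b i 0 = n i) (hne : (openPolyhedron n h).Nonempty)
    (δ : ι → ℝ) :
    HasDerivAt (fun t : ℝ => polyVol n (h + t • δ)) (∑ j, δ j * facetVol b n j h) 0 := by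
  classical
  refine hasDerivAt_of_partials ?_ (continuousAt_facetVol hn hinj hps hb hne) δ
  filter_upwards [eventually_openPolyhedron_nonempty hne] with p hp j
  exact hasDerivAt_polyVol_update hn hinj hps hb hp j

/-- The volume is the sum of the volumes of the cones over the facets. -/
theorem sum_mul_facetVol (hn : ∀ i, ‖n i‖ = 1)
    (hinj : Function.Injective n)
    (hps : PositivelySpans n) (hb : ∀ i, b i 0 = n i) (hne : (openPolyhedron n h).Nonempty) :
    ∑ j, h j * facetVol b n j h = (d + 1 : ℕ) * polyVol n h := by
  have h1 := hasDerivAt_polyVol hn hinj hps hb hne h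
  have h2 : HasDerivAt (fun t : ℝ => (1 + t) ^ (d + 1) * polyVol n h)
      ((d + 1 : ℕ) * polyVol n h) 0 := by
    have := (((hasDerivAt_id (0 : ℝ)).const_add 1).pow (d + 1)).mul_const (polyVol n h)
    simpa using this
  refine h1.unique (h2.congr_of_eventuallyEq ?_)
  filter_upwards [Ioi_mem_nhds (show (-1 : ℝ) < 0 by norm_num)] with t ht
  have : h + t • h = (1 + t) • h := by rw [add_smul, one_smul]
  rw [this, polyVol_smul (by have : -1 < t := ht; linarith)]

/-- Minkowski's first inequality. -/
theorem minkowski_inequality (hn : ∀ i, ‖n i‖ = 1)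
    (hinj : Function.Injective n)
    (hps : PositivelySpans n) (hb : ∀ i, b i 0 = n i) (hne : (openPolyhedron n h).Nonempty)
    {s : ℝ} (hs : 0 < s) (hV : polyVol n h ≤ s ^ (d + 1) * polyVol n q) :
    (d + 1 : ℕ) * polyVol n h ≤ s * ∑ j, q j * facetVol b n j h := by
  have h1 := hasDerivAt_polyVol hn hinj hps hb hne (s • q - h)
  have hpos := polyVol_pos hps hne
  rw [← polyVol_smul hs] at hV
  have h2 : 0 ≤ ∑ j, (s • q - h) j * facetVol b n j h := by
    have h3 := h1.tendsto_slope_zero_right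
    refine ge_of_tendsto h3 ?_
    filter_upwards [Ioo_mem_nhdsGT (zero_lt_one' ℝ)] with t ht
    have h4 := polyVol_le_polyVol_combo hps ht.1 ht.2 hpos hV
    have h5 : (1 - t) • h + t • s • q = h + t • (s • q - h) := by
      rw [sub_smul, one_smul, smul_sub]; abel
    rw [h5] at h4
    simp only [zero_add, zero_smul, add_zero, smul_eq_mul]
    exact mul_nonneg (inv_nonneg.2 ht.1.le) (by linarith)
  rw [← sum_mul_facetVol hn hinj hps hb hne, Finset.mul_sum, ← sub_nonneg, ← Finset.sum_sub_distrib]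
  refine h2.trans_eq (Finset.sum_congr rfl fun j _ => ?_)
  simp only [Pi.sub_apply, Pi.smul_apply, smul_eq_mul]
  ring

end FacetVolume

section Uniqueness

variable {d : ℕ} {ι : Type*} {n : ι → Euc (d + 1)} {h q : ι → ℝ}
  {b : ι → OrthonormalBasis (Fin (d + 1)) ℝ (Euc (d + 1))}

theorem sliceVol_nonneg (b : OrthonormalBasis (Fin (d + 1)) ℝ (Euc (d + 1))) (s : ℝ) :
    0 ≤ sliceVol b n h s := ENNReal.toReal_nonneg

theorem sliceVol_eq_zero {b : OrthonormalBasis (Fin (d + 1)) ℝ (Euc (d + 1))} {s : ℝ}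
    (hs : ∀ x ∈ polyhedron n h, ⟪x, b 0⟫ ≠ s) : sliceVol b n h s = 0 := by
  have : slice b (polyhedron n h) s = ∅ := by
    rw [eq_empty_iff_forall_notMem]
    exact fun y hy => hs _ hy (inner_sliceMap_zero b s y)
  simp [sliceVol, this]

theorem exists_mem_of_sliceVol_pos {b : OrthonormalBasis (Fin (d + 1)) ℝ (Euc (d + 1))} {s : ℝ}
    (hs : 0 < sliceVol b n h s) : ∃ x ∈ polyhedron n h, ⟪x, b 0⟫ = s := by
  by_contra! hne
  exact hs.ne' (sliceVol_eq_zero hne)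

/-- An open segment from an interior point of a polyhedron stays in the interior. -/
theorem openPolyhedron_combo {t : ℝ} (ht0 : 0 ≤ t) (ht1 : t < 1) {x y : Euc (d + 1)}
    (hx : x ∈ openPolyhedron n h) (hy : y ∈ polyhedron n h) :
    (1 - t) • x + t • y ∈ openPolyhedron n h := by
  intro i
  rw [inner_add_left, real_inner_smul_left, real_inner_smul_left]
  have h1 := mul_lt_mul_of_pos_left (hx i) (sub_pos.2 ht1)
  have h2 := mul_le_mul_of_nonneg_left (hy i) ht0
  linarith

theorem exists_mem_openPolyhedron_inner_eq {u x y z : Euc (d + 1)} (hx : x ∈ openPolyhedron n h)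
    (hy : y ∈ polyhedron n h) (hz : z ∈ polyhedron n h) {s : ℝ} (hys : ⟪y, u⟫ < s)
    (hzs : s < ⟪z, u⟫) : ∃ w ∈ openPolyhedron n h, ⟪w, u⟫ = s := by
  have key : ∀ y ∈ polyhedron n h, ∀ t : ℝ, 0 ≤ t → t < 1 →
      (1 - t) * ⟪x, u⟫ + t * ⟪y, u⟫ = s → ∃ w ∈ openPolyhedron n h, ⟪w, u⟫ = s := by
    intro y hy t ht0 ht1 hts
    refine ⟨_, openPolyhedron_combo ht0 ht1 hx hy, ?_⟩
    rwa [inner_add_left, real_inner_smul_left, real_inner_smul_left]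
  rcases le_or_gt ⟪x, u⟫ s with hxs | hxs
  · have hpos : 0 < ⟪z, u⟫ - ⟪x, u⟫ := by linarith
    refine key z hz ((s - ⟪x, u⟫) / (⟪z, u⟫ - ⟪x, u⟫)) (div_nonneg (by linarith) hpos.le) ?_ ?_
    · rw [div_lt_one hpos]; linarith
    · field_simp; ring
  · have hpos : 0 < ⟪x, u⟫ - ⟪y, u⟫ := by linarith
    refine key y hy ((⟪x, u⟫ - s) / (⟪x, u⟫ - ⟪y, u⟫)) (div_nonneg (by linarith) hpos.le) ?_ ?_
    · rw [div_lt_one hpos]; linarith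
    · field_simp; ring

theorem sliceVol_pos [Finite ι] (hps : PositivelySpans n)
    {b : OrthonormalBasis (Fin (d + 1)) ℝ (Euc (d + 1))} {s : ℝ}
    (hs : ∃ w ∈ openPolyhedron n h, ⟪w, b 0⟫ = s) : 0 < sliceVol b n h s := by
  obtain ⟨w, hw, rfl⟩ := hs
  refine ENNReal.toReal_pos ?_ (slice_isBounded b (polyhedron_isBounded hps) _).measure_lt_top.ne
  have hopen : IsOpen (sliceMap b ⟪w, b 0⟫ ⁻¹' openPolyhedron n h) :=
    openPolyhedron_isOpen.preimage (sliceMap_isometry b _).continuous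
  refine ((hopen.measure_pos volume ⟨sliceProj b w, ?_⟩).trans_le
    (measure_mono (preimage_mono openPolyhedron_subset))).ne'
  rwa [mem_preimage, sliceMap_inner_sliceProj]

theorem continuousAt_sliceVol_of_mem [Fintype ι] (hn : ∀ i, ‖n i‖ = 1)
    (hinj : Function.Injective n) (hps : PositivelySpans n) (hb : ∀ i, b i 0 = n i) {j : ι} {s : ℝ}
    {x : Euc (d + 1)} (hx : x ∈ polyhedron n h) (hxs : ⟪x, n j⟫ < s) (hs : s < h j) :
    ContinuousAt (sliceVol (b j) n h) s := by
  refine continuousAt_sliceVol (p := fun _ => h) hps (b j) continuousAt_const continuousAt_id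
    fun i hi => Or.inl ?_
  rcases eq_or_eq_neg_of_sliceProj_eq_zero (b j) (hn i) hi with h1 | h1
  · rw [hb] at h1
    obtain rfl := hinj h1
    simp only [hb, real_inner_self_eq_norm_sq, hn]
    intro h2
    linarith [show id s = s from rfl]
  · rw [hb] at h1 ⊢
    have h2 := hx i
    rw [h1, inner_neg_right] at h2
    rw [h1, inner_neg_right, real_inner_self_eq_norm_sq, hn]
    intro h3
    linarith [show id s = s from rfl]

theorem sqrt_sliceVol_mul_sliceVol_le [Finite ι] (hps : PositivelySpans n)
    (b : OrthonormalBasis (Fin (d + 1)) ℝ (Euc (d + 1))) (x y : ℝ) :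
    √(sliceVol b n h x * sliceVol b n q y) ≤
      sliceVol b n ((1 - 1 / 2 : ℝ) • h + (1 / 2 : ℝ) • q) ((x + y) / 2) := by
  have hmeas : ∀ (p : ι → ℝ) s, MeasurableSet (slice b (polyhedron n p) s) := fun p s =>
    slice_measurableSet b polyhedron_isClosed.measurableSet s
  have hbd : ∀ (p : ι → ℝ) s, Bornology.IsBounded (slice b (polyhedron n p) s) := fun p s =>
    slice_isBounded b (polyhedron_isBounded hps) s
  have hbm := brunn_minkowski_euclidean (t := 1 / 2) (by norm_num) (by norm_num)
    (hmeas h x) (hmeas q y) (hmeas ((1 - 1 / 2 : ℝ) • h + (1 / 2 : ℝ) • q) ((x + y) / 2))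
    (hbd _ _) (hbd _ _) (hbd _ _) (by
      intro y₁ hy₁ y₂ hy₂
      have := polyhedron_combo (t := 1 / 2) (by norm_num) (by norm_num) hy₁ hy₂
      rw [← sliceMap_combo] at this
      rw [slice, mem_preimage]
      convert this using 2
      ring)
  have h2 := ENNReal.toReal_mono (hbd _ _).measure_lt_top.ne hbm
  rw [ENNReal.toReal_mul, ← ENNReal.toReal_rpow, ← ENNReal.toReal_rpow] at h2
  rw [Real.sqrt_mul (sliceVol_nonneg b x), Real.sqrt_eq_rpow, Real.sqrt_eq_rpow]
  norm_num at h2 ⊢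
  exact h2

theorem exists_translation_along_normal [Fintype ι] (hn : ∀ i, ‖n i‖ = 1)
    (hinj : Function.Injective n) (hps : PositivelySpans n) (hb : ∀ i, b i 0 = n i)
    (hne : (openPolyhedron n h).Nonempty) (hqne : (openPolyhedron n q).Nonempty)
    (hVq : polyVol n q = polyVol n h)
    (hmid : polyVol n ((1 - 1 / 2 : ℝ) • h + (1 / 2 : ℝ) • q) ≤ polyVol n h)
    {j : ι} (hj : ∃ x ∈ polyhedron n h, ⟪x, n j⟫ = h j)
    (hqj : ∃ x ∈ polyhedron n q, ⟪x, n j⟫ = q j) :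
    ∃ e, q j = h j + e ∧
      ∫ x in polyhedron n q, ⟪x, n j⟫ = (∫ x in polyhedron n h, ⟪x, n j⟫) + e * polyVol n h := by
  have hint : ∀ p : ι → ℝ, Integrable (sliceVol (b j) n p) := fun p =>
    integrable_volume_slice (b j) polyhedron_isClosed.measurableSet
      (polyhedron_isBounded hps).measure_lt_top.ne
  have hVint : ∀ p : ι → ℝ, polyVol n p = ∫ s, sliceVol (b j) n p s := fun p =>
    toReal_volume_eq_integral_slice (b j) polyhedron_isClosed.measurableSet
      (polyhedron_isBounded hps)
  have hmin : ∀ p : ι → ℝ, (openPolyhedron n p).Nonempty →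
      ∃ y ∈ polyhedron n p, ∀ x ∈ polyhedron n p, ⟪y, n j⟫ ≤ ⟪x, n j⟫ := fun p hp =>
    (polyhedron_isCompact hps).exists_isMinOn (hp.mono openPolyhedron_subset)
      (f := fun x => ⟪x, n j⟫) (Continuous.continuousOn (by fun_prop))
  obtain ⟨y, hy, hymin⟩ := hmin h hne
  obtain ⟨z, hz, hzmin⟩ := hmin q hqne
  have hlt : ∀ p : ι → ℝ, (openPolyhedron n p).Nonempty → ∀ y,
      (∀ x ∈ polyhedron n p, ⟪y, n j⟫ ≤ ⟪x, n j⟫) → ⟪y, n j⟫ < p j := by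
    rintro p ⟨x, hx⟩ y hy
    exact (hy x (openPolyhedron_subset hx)).trans_lt (hx j)
  have hpos : ∀ p : ι → ℝ, (openPolyhedron n p).Nonempty →
      (∃ x ∈ polyhedron n p, ⟪x, n j⟫ = p j) → ∀ y ∈ polyhedron n p,
      ∀ s ∈ Ioo ⟪y, n j⟫ (p j), 0 < sliceVol (b j) n p s := by
    rintro p ⟨x, hx⟩ ⟨w, hw, hwj⟩ y hy s hs
    refine sliceVol_pos hps ?_
    rw [hb]
    exact exists_mem_openPolyhedron_inner_eq hx hy hw hs.1 (hwj ▸ hs.2)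
  have hzero : ∀ p : ι → ℝ, ∀ y, (∀ x ∈ polyhedron n p, ⟪y, n j⟫ ≤ ⟪x, n j⟫) →
      ∀ s, s ∉ Icc ⟪y, n j⟫ (p j) → sliceVol (b j) n p s = 0 := by
    intro p y hy s hs
    refine sliceVol_eq_zero fun x hx hxs => hs ?_
    rw [hb] at hxs
    exact hxs ▸ ⟨hy x hx, hx j⟩
  have hVii : ∀ p : ι → ℝ, ∀ y, (∀ x ∈ polyhedron n p, ⟪y, n j⟫ ≤ ⟪x, n j⟫) →
      ⟪y, n j⟫ < p j → ∫ s in ⟪y, n j⟫..(p j), sliceVol (b j) n p s = polyVol n p := by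
    intro p y hy hlt
    rw [hVint, intervalIntegral.integral_of_le hlt.le, ← integral_Icc_eq_integral_Ioc]
    exact setIntegral_eq_integral_of_forall_compl_eq_zero (hzero p y hy)
  set M := (1 - 1 / 2 : ℝ) • h + (1 / 2 : ℝ) • q with hM
  have hMj : (h j + q j) / 2 = M j := by
    simp only [hM, Pi.add_apply, Pi.smul_apply, smul_eq_mul]; ring
  have hyz : (1 - 1 / 2 : ℝ) • y + (1 / 2 : ℝ) • z ∈ polyhedron n M :=
    polyhedron_combo (by norm_num) (by norm_num) hy hz
  have hyzj : ⟪(1 - 1 / 2 : ℝ) • y + (1 / 2 : ℝ) • z, n j⟫ = (⟪y, n j⟫ + ⟪z, n j⟫) / 2 := by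
    rw [inner_add_left, real_inner_smul_left, real_inner_smul_left]; ring
  have hly := hlt h hne y hymin
  have hlz := hlt q hqne z hzmin
  obtain ⟨e, he1, he2, he3⟩ := prekopa_leindler_eq_case hly hlz
    (f := sliceVol (b j) n h) (g := sliceVol (b j) n q) (h := sliceVol (b j) n M)
    (fun s hs => (continuousAt_sliceVol_of_mem hn hinj hps hb hy hs.1 hs.2).continuousWithinAt)
    (fun s hs => (continuousAt_sliceVol_of_mem hn hinj hps hb hz hs.1 hs.2).continuousWithinAt)
    (fun s hs => (continuousAt_sliceVol_of_mem hn hinj hps hb hyz (hyzj ▸ hs.1)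
      (hMj ▸ hs.2)).continuousWithinAt)
    (hpos h hne hj y hy) (hpos q hqne hqj z hz) (sliceVol_nonneg _)
    (hint h).intervalIntegrable (hint q).intervalIntegrable (hint M).intervalIntegrable
    (by rw [hVii h y hymin hly, hVii q z hzmin hlz, hVq])
    (by
      rw [hVii h y hymin hly]
      refine le_trans ?_ hmid
      rw [hVint M, intervalIntegral.integral_of_le (by linarith)]
      exact setIntegral_le_integral (hint M) (.of_forall (sliceVol_nonneg _)))
    (fun s _ r _ => sqrt_sliceVol_mul_sliceVol_le hps (b j) s r)
  refine ⟨e, he2, ?_⟩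
  have hae : ∀ᵐ s : ℝ, sliceVol (b j) n q (s + e) = sliceVol (b j) n h s := by
    have h0 : ∀ r : ℝ, ∀ᵐ s : ℝ, s ≠ r := fun r =>
      measure_eq_zero_iff_ae_notMem.1 (measure_singleton (μ := volume) r)
    filter_upwards [h0 ⟪y, n j⟫, h0 (h j)] with s hs1 hs2
    by_cases hs : s ∈ Ioo ⟪y, n j⟫ (h j)
    · exact (he3 s hs).symm
    · have hs' : s ∉ Icc ⟪y, n j⟫ (h j) := fun hh =>
        hs ⟨lt_of_le_of_ne hh.1 (Ne.symm hs1), lt_of_le_of_ne hh.2 hs2⟩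
      rw [hzero h y hymin s hs', hzero q z hzmin]
      rw [he1, he2]
      exact fun hh => hs' ⟨by linarith [hh.1], by linarith [hh.2]⟩
  have hmom : ∀ p : ι → ℝ, ∫ x in polyhedron n p, ⟪x, n j⟫ = ∫ s, s * sliceVol (b j) n p s := by
    intro p
    have := setIntegral_inner_eq_integral_slice (b j) (polyhedron_isCompact hps (n := n) (h := p))
    rwa [hb] at this
  have hmi : Integrable fun s => s * sliceVol (b j) n h s := by
    rw [← integrableOn_iff_integrable_of_support_subset (s := Icc ⟪y, n j⟫ (h j))]
    · exact (hint h).integrableOn.continuousOn_mul continuousOn_id isCompact_Icc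
    · intro s hs
      by_contra hs'
      exact hs (by simp [hzero h y hymin s hs'])
  rw [hmom, hmom, hVint, ← integral_add_right_eq_self _ e, ← integral_const_mul,
    ← integral_add hmi ((hint h).const_mul e)]
  refine integral_congr_ae ?_
  filter_upwards [hae] with s hs
  rw [hs]
  ring

/-- Polyhedra with the same facet volumes are translates of each other. -/
theorem exists_translation_of_facetVol_eq [Fintype ι] (hd : d ≠ 0) (hn : ∀ i, ‖n i‖ = 1)
    (hinj : Function.Injective n) (hps : PositivelySpans n) (hb : ∀ i, b i 0 = n i)
    (hne : (openPolyhedron n h).Nonempty) (hqne : (openPolyhedron n q).Nonempty)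
    (hpos : ∀ j, 0 < facetVol b n j h) (heq : ∀ j, facetVol b n j h = facetVol b n j q) :
    ∃ v : Euc (d + 1), polyhedron n q = v +ᵥ polyhedron n h := by
  have hle : ∀ {h q : ι → ℝ}, (openPolyhedron n h).Nonempty → (openPolyhedron n q).Nonempty →
      (∀ j, facetVol b n j h = facetVol b n j q) → polyVol n h ≤ polyVol n q := by
    intro h q hne hqne heq
    have hV := polyVol_pos hps hne
    have hW := polyVol_pos hps hqne
    by_contra! hlt
    set s := (polyVol n h / polyVol n q) ^ ((1 : ℝ) / (d + 1 : ℕ)) with hs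
    have hs0 : 0 < s := by positivity
    have hsm : s ^ (d + 1) = polyVol n h / polyVol n q := by
      rw [hs, one_div, Real.rpow_inv_natCast_pow (by positivity) (by simp)]
    have hs1 : 1 < s := Real.one_lt_rpow ((one_lt_div hW).2 hlt) (by positivity)
    have h1 := minkowski_inequality hn hinj hps hb hne hs0 (q := q) (by rw [hsm]; field_simp; rfl)
    simp only [heq, sum_mul_facetVol hn hinj hps hb hqne] at h1
    have h2 : polyVol n h ≤ s * polyVol n q := by
      have : (0 : ℝ) < (d + 1 : ℕ) := by positivity
      nlinarith
    have h3 : s ^ (d + 1) ≤ s ^ 1 := by rw [hsm, div_le_iff₀ hW, pow_one]; exact h2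
    have h4 := (pow_le_pow_iff_right₀ hs1).1 h3
    omega
  have hVq : polyVol n q = polyVol n h :=
    le_antisymm (hle hqne hne fun j => (heq j).symm) (hle hne hqne heq)
  have hV := polyVol_pos hps hne
  have hmid : polyVol n ((1 - 1 / 2 : ℝ) • h + (1 / 2 : ℝ) • q) ≤ polyVol n h := by
    by_contra! hlt
    set M := (1 - 1 / 2 : ℝ) • h + (1 / 2 : ℝ) • q with hM
    have hW := hV.trans hlt
    set s := (polyVol n h / polyVol n M) ^ ((1 : ℝ) / (d + 1 : ℕ)) with hs
    have hs0 : 0 < s := by positivity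
    have hsm : s ^ (d + 1) = polyVol n h / polyVol n M := by
      rw [hs, one_div, Real.rpow_inv_natCast_pow (by positivity) (by simp)]
    have hs1 : s < 1 := Real.rpow_lt_one (by positivity) ((div_lt_one hW).2 hlt) (by positivity)
    have h1 := minkowski_inequality hn hinj hps hb hne hs0 (q := M) (by rw [hsm]; field_simp; rfl)
    have h2 : ∑ j, M j * facetVol b n j h = (d + 1 : ℕ) * polyVol n h := by
      have h3 := sum_mul_facetVol hn hinj hps hb hne
      have h4 := sum_mul_facetVol hn hinj hps hb hqne
      simp only [← heq, hVq] at h4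
      calc ∑ j, M j * facetVol b n j h = 1 / 2 * ∑ j, h j * facetVol b n j h +
            1 / 2 * ∑ j, q j * facetVol b n j h := by
            rw [Finset.mul_sum, Finset.mul_sum, ← Finset.sum_add_distrib]
            refine Finset.sum_congr rfl fun j _ => ?_
            simp only [hM, Pi.add_apply, Pi.smul_apply, smul_eq_mul]
            ring
        _ = _ := by rw [h3, h4]; ring
    rw [h2] at h1
    have : (0 : ℝ) < (d + 1 : ℕ) * polyVol n h := by positivity
    nlinarith
  have hatt : ∀ p : ι → ℝ, ∀ j, 0 < facetVol b n j p → ∃ x ∈ polyhedron n p, ⟪x, n j⟫ = p j := by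
    intro p j hp
    have := exists_mem_of_sliceVol_pos hp
    rwa [hb] at this
  choose e he1 he2 using fun j => exists_translation_along_normal hn hinj hps hb hne hqne hVq hmid
    (hatt h j (hpos j)) (hatt q j (heq j ▸ hpos j))
  set v : Euc (d + 1) := (polyVol n h)⁻¹ • ((∫ x in polyhedron n q, x) - ∫ x in polyhedron n h, x)
    with hv
  have hinn : ∀ (p : ι → ℝ) j, ⟪∫ x in polyhedron n p, x, n j⟫ =
      ∫ x in polyhedron n p, ⟪x, n j⟫ := by
    intro p j
    rw [real_inner_comm, ← integral_inner]
    · simp only [real_inner_comm]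
    · exact continuousOn_id.integrableOn_compact (polyhedron_isCompact hps)
  refine ⟨v, ?_⟩
  rw [← polyhedron_translate]
  congr 1
  ext j
  rw [Pi.add_apply, he1 j, hv, real_inner_smul_left, inner_sub_left, hinn, hinn, he2 j]
  field_simp
  ring

end Uniqueness

section Existence

variable {ι : Type*} [Fintype ι] {F : ι → ℝ}

theorem positivelySpans_of_sum_eq_zero {m : ℕ} (hm : m ≠ 0) {n : ι → Euc m} (hF : ∀ j, 0 < F j)
    (hspan : ¬∃ f : Euc m →ₗ[ℝ] ℝ, f ≠ 0 ∧ ∀ j, f (n j) = 0) (hsum : ∑ j, F j • n j = 0) :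
    PositivelySpans n := by
  have : NeZero m := ⟨hm⟩
  have hinner : ∀ x : Euc m, x ≠ 0 → ∃ j, 0 < ⟪x, n j⟫ := by
    intro x hx
    by_contra! hle
    refine hspan ⟨(innerSL ℝ x).toLinearMap, fun h0 => hx ?_, fun j => ?_⟩
    · have := LinearMap.congr_fun h0 x
      simpa using this
    · have h1 : ∑ j, F j * ⟪x, n j⟫ = 0 := by
        have := congrArg (fun y => ⟪x, y⟫) hsum
        simpa [inner_sum, real_inner_smul_right] using this
      have h2 := (Finset.sum_eq_zero_iff_of_nonpos fun j _ =>
        mul_nonpos_of_nonneg_of_nonpos (hF j).le (hle j)).1 h1 j (Finset.mem_univ j)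
      simpa [(hF j).ne'] using h2
  obtain ⟨x₁, hx₁⟩ := exists_ne (0 : Euc m)
  obtain ⟨j₁, -⟩ := hinner x₁ hx₁
  have hne : (Finset.univ : Finset ι).Nonempty := ⟨j₁, Finset.mem_univ _⟩
  obtain ⟨x₀, hx₀, hmin⟩ := (isCompact_sphere (0 : Euc m) 1).exists_isMinOn
    (NormedSpace.sphere_nonempty.2 zero_le_one)
    (f := fun x => Finset.univ.sup' hne fun j => ⟪x, n j⟫)
    (Continuous.continuousOn (Continuous.finset_sup'_apply hne fun j _ => by fun_prop))
  have hx₀' : ‖x₀‖ = 1 := by simpa using hx₀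
  obtain ⟨j₀, hj₀⟩ := hinner x₀ (by rintro rfl; simp at hx₀')
  refine ⟨_, hj₀.trans_le (Finset.le_sup' (fun j => ⟪x₀, n j⟫) (Finset.mem_univ j₀)), fun x => ?_⟩
  rcases eq_or_ne x 0 with rfl | hx
  · exact ⟨j₁, by simp⟩
  obtain ⟨j, -, hj⟩ := Finset.exists_mem_eq_sup' hne fun j => ⟪‖x‖⁻¹ • x, n j⟫
  refine ⟨j, ?_⟩
  have h1 := hmin (show ‖x‖⁻¹ • x ∈ Metric.sphere (0 : Euc m) 1 by
    simp [norm_smul, hx])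
  simp only [mem_ofPred_eq, hj] at h1
  rw [real_inner_smul_left, ← div_eq_inv_mul, le_div_iff₀ (norm_pos_iff.2 hx)] at h1
  exact h1

variable {d : ℕ} {n : ι → Euc (d + 1)} {b : ι → OrthonormalBasis (Fin (d + 1)) ℝ (Euc (d + 1))}

/-- Among the polyhedra with a given weighted sum of support numbers there is one of maximal
volume. -/
theorem exists_polyVol_isMax [Nonempty ι] (hn : ∀ i, ‖n i‖ = 1) (hps : PositivelySpans n)
    (hF : ∀ j, 0 < F j) (hsum : ∑ j, F j • n j = 0) :
    ∃ h : ι → ℝ, ∑ j, F j * h j = 1 ∧ 0 < polyVol n h ∧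
      ∀ p : ι → ℝ, ∑ j, F j * p j = 1 → polyVol n p ≤ polyVol n h := by
  have hn0 : ∀ i, n i ≠ 0 := fun i hi => by simpa [hi] using hn i
  set K : Set (ι → ℝ) := Ici 0 ∩ {h | ∑ j, F j * h j = 1} with hK
  have hKcl : IsClosed K := isClosed_Ici.inter (isClosed_eq (by fun_prop) continuous_const)
  have hKc : IsCompact K := by
    refine (isCompact_Icc (a := (0 : ι → ℝ)) (b := fun j => (F j)⁻¹)).of_isClosed_subset hKcl ?_
    rintro h ⟨h0, h1 : ∑ j, F j * h j = 1⟩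
    refine ⟨h0, fun j => ?_⟩
    have h2 : F j * h j ≤ ∑ j, F j * h j :=
      Finset.single_le_sum (f := fun j => F j * h j) (fun i _ => mul_nonneg (hF i).le (h0 i))
        (Finset.mem_univ j)
    rw [h1] at h2
    change h j ≤ (F j)⁻¹
    rwa [← one_div, le_div_iff₀ (hF j), mul_comm]
  have hFs : 0 < ∑ j, F j := Finset.sum_pos (fun j _ => hF j) Finset.univ_nonempty
  have hcK : (fun _ => (∑ j, F j)⁻¹ : ι → ℝ) ∈ K :=
    ⟨fun j => inv_nonneg.2 hFs.le, show ∑ j, F j * _ = 1 by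
      rw [← Finset.sum_mul, mul_inv_cancel₀ hFs.ne']⟩
  obtain ⟨h, hhK, hmax⟩ := hKc.exists_isMaxOn ⟨_, hcK⟩ (polyVol_continuous hn0 hps).continuousOn
  have hpos : 0 < polyVol n h := by
    refine lt_of_lt_of_le (polyVol_pos hps ⟨0, fun i => ?_⟩) (hmax hcK)
    rw [inner_zero_left]
    positivity
  refine ⟨h, hhK.2, hpos, fun p hp => ?_⟩
  rcases (ENNReal.toReal_nonneg : 0 ≤ polyVol n p).eq_or_lt with h0 | h0
  · exact h0.symm.trans_le hpos.le
  obtain ⟨x, hx⟩ := openPolyhedron_nonempty_of_polyVol_pos hn0 h0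
  have h1 : polyVol n (p + fun i => ⟪-x, n i⟫) = polyVol n p := by
    rw [polyVol, polyhedron_translate, measure_vadd, polyVol]
  rw [← h1]
  refine hmax ⟨fun j => ?_, ?_⟩
  · have := hx j
    simp only [Pi.zero_apply, Pi.add_apply, inner_neg_left]
    linarith
  · have h2 : ∑ j, F j * ⟪-x, n j⟫ = 0 := by
      have := congrArg (fun y => ⟪-x, y⟫) hsum
      simpa only [inner_sum, real_inner_smul_right, inner_zero_right] using this
    simp only [mem_ofPred_eq, Pi.add_apply, mul_add, Finset.sum_add_distrib, hp, h2, add_zero]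

theorem exists_facetVol_eq [Nonempty ι] (hd : d ≠ 0) (hn : ∀ i, ‖n i‖ = 1)
    (hinj : Function.Injective n)
    (hps : PositivelySpans n) (hb : ∀ i, b i 0 = n i)
    (hF : ∀ j, 0 < F j) (hsum : ∑ j, F j • n j = 0) :
    ∃ h : ι → ℝ, (openPolyhedron n h).Nonempty ∧ ∀ j, facetVol b n j h = F j := by
  have hn0 : ∀ i, n i ≠ 0 := fun i hi => by simpa [hi] using hn i
  obtain ⟨h, hh1, hpos, hmax⟩ := exists_polyVol_isMax hn hps hF hsum
  have hne := openPolyhedron_nonempty_of_polyVol_pos hn0 hpos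
  have hcrit : ∀ δ : ι → ℝ, ∑ j, F j * δ j = 0 → ∑ j, δ j * facetVol b n j h = 0 := by
    intro δ hδ
    refine IsLocalMax.hasDerivAt_eq_zero (.of_forall fun t => ?_)
      (hasDerivAt_polyVol hn hinj hps hb hne δ)
    simp only [zero_smul, add_zero]
    refine hmax _ ?_
    simp only [Pi.add_apply, Pi.smul_apply, smul_eq_mul, mul_add, Finset.sum_add_distrib, hh1,
      mul_left_comm _ t, ← Finset.mul_sum, hδ, mul_zero, add_zero]
  set c := (∑ j, F j * facetVol b n j h) / ∑ j, F j * F j with hc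
  have hFF : 0 < ∑ j, F j * F j :=
    Finset.sum_pos (fun j _ => mul_pos (hF j) (hF j)) Finset.univ_nonempty
  have hA : ∀ j, facetVol b n j h = c * F j := by
    have h0 : ∑ j, F j * (facetVol b n j h - c * F j) = 0 := by
      simp only [mul_sub, Finset.sum_sub_distrib, mul_left_comm _ c, ← Finset.mul_sum]
      rw [hc, div_mul_cancel₀ _ hFF.ne', sub_self]
    have h1 := hcrit _ h0
    have h2 : ∑ j, (facetVol b n j h - c * F j) ^ 2 = 0 := by
      calc ∑ j, (facetVol b n j h - c * F j) ^ 2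
          = ∑ j, (facetVol b n j h - c * F j) * facetVol b n j h -
            c * ∑ j, F j * (facetVol b n j h - c * F j) := by
            rw [Finset.mul_sum, ← Finset.sum_sub_distrib]
            exact Finset.sum_congr rfl fun j _ => by ring
        _ = 0 := by rw [h0, h1]; ring
    intro j
    have := (Finset.sum_eq_zero_iff_of_nonneg fun j _ => sq_nonneg _).1 h2 j (Finset.mem_univ j)
    linarith [pow_eq_zero_iff two_ne_zero |>.1 this]
  have hc0 : 0 < c := by
    have h1 := sum_mul_facetVol hn hinj hps hb hne
    simp only [hA, mul_left_comm _ c, ← Finset.mul_sum] at h1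
    simp only [mul_comm (h _), hh1, mul_one] at h1
    rw [h1]
    positivity
  have ht : 0 < (c⁻¹) ^ ((1 : ℝ) / d) := by positivity
  refine ⟨(c⁻¹) ^ ((1 : ℝ) / d) • h, ?_, fun j => ?_⟩
  · refine openPolyhedron_nonempty_of_polyVol_pos hn0 ?_
    rw [polyVol_smul ht]
    positivity
  · rw [facetVol_smul ht, one_div, Real.rpow_inv_natCast_pow (by positivity) hd, hA]
    field_simp

end Existence

section Faces

variable {ι : Type*}

theorem faceIn_eq {m : ℕ} {P : Set (Euc m)} {u : Euc m} {s : ℝ} (hle : ∀ x ∈ P, ⟪x, u⟫ ≤ s)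
    (hs : ∃ x ∈ P, ⟪x, u⟫ = s) : faceIn P u = {x ∈ P | ⟪x, u⟫ = s} := by
  obtain ⟨x₀, hx₀, rfl⟩ := hs
  ext x
  refine and_congr_right fun hx => ⟨fun h => ?_, fun h y hy => ?_⟩
  · exact le_antisymm (hle x hx) (h x₀ hx₀)
  · exact (hle y hy).trans_eq h.symm

theorem isPolytope_polyhedron [Finite ι] {m : ℕ} {n : ι → Euc m} {h : ι → ℝ}
    (hps : PositivelySpans n) : IsPolytope (polyhedron n h) := by
  set P := polyhedron n h with hP
  have hc : IsCompact P := polyhedron_isCompact hps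
  have hfin : (P.extremePoints ℝ).Finite := by
    refine Set.Finite.of_finite_image (f := fun x => {i | ⟪x, n i⟫ = h i}) (Set.toFinite _) ?_
    intro x hx y hy hxy
    have hact : ∀ i, ⟪x, n i⟫ = h i → ⟪y, n i⟫ = h i := fun i hi => by
      have : i ∈ {i | ⟪x, n i⟫ = h i} := hi
      simp only at hxy
      rw [hxy] at this
      exact this
    have hev : ∀ w : Euc m, (∀ i, ⟪x, n i⟫ = h i → ⟪w, n i⟫ = 0) →
        ∀ᶠ t in 𝓝[>] (0 : ℝ), x + t • w ∈ P := by
      intro w hw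
      refine Filter.eventually_all.2 fun i => ?_
      rcases (hx.1 i).eq_or_lt with hi | hi
      · refine .of_forall fun t => ?_
        rw [inner_add_left, real_inner_smul_left, hw i hi, hi]
        simp
      · have hcont : Continuous fun t : ℝ => ⟪x + t • w, n i⟫ := by fun_prop
        have h1 := (hcont.tendsto 0).eventually (gt_mem_nhds (b := ⟪x + (0 : ℝ) • w, n i⟫)
          (by simpa using hi))
        exact (h1.filter_mono nhdsWithin_le_nhds).mono fun t ht => le_of_lt ht
    have h1 := hev (x - y) fun i hi => by rw [inner_sub_left, hi, hact i hi, sub_self]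
    have h2 := hev (-(x - y)) fun i hi => by
      rw [inner_neg_left, inner_sub_left, hi, hact i hi, sub_self, neg_zero]
    obtain ⟨t, ⟨ht1, ht2⟩, ht0⟩ := ((h1.and h2).and self_mem_nhdsWithin).exists
    have hseg : x ∈ openSegment ℝ (x + t • (x - y)) (x + t • -(x - y)) :=
      ⟨1 / 2, 1 / 2, by norm_num, by norm_num, by norm_num, by module⟩
    have h3 := hx.2 ht1 ht2 hseg
    have h4 : t • (x - y) = 0 := by simpa using h3
    rcases smul_eq_zero.1 h4 with h5 | h5
    · exact absurd h5 (ne_of_gt ht0)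
    · exact sub_eq_zero.1 h5
  refine ⟨hfin.toFinset, ?_⟩
  have hKM := closure_convexHull_extremePoints hc polyhedron_convex
  rw [(hfin.isCompact_convexHull ℝ).isClosed.closure_eq] at hKM
  rw [hfin.coe_toFinset, hKM]

variable {d : ℕ} {n : ι → Euc (d + 1)} {h : ι → ℝ}
  {b : ι → OrthonormalBasis (Fin (d + 1)) ℝ (Euc (d + 1))}

theorem isConvexBody_polyhedron [Finite ι] (hps : PositivelySpans n)
    (hne : (openPolyhedron n h).Nonempty) : IsConvexBody (polyhedron n h) :=
  ⟨polyhedron_convex, polyhedron_isCompact hps,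
    hne.mono (openPolyhedron_isOpen.subset_interior_iff.2 openPolyhedron_subset)⟩

theorem faceArea_polyhedron [Finite ι] {c : ℝ}
    (hc : ∀ (b : OrthonormalBasis (Fin (d + 1)) ℝ (Euc (d + 1))) (S : Set (Euc (d + 1))) (s : ℝ),
      μH[((d + 1 : ℕ) : ℝ) - 1] {x ∈ S | ⟪x, b 0⟫ = s} = ENNReal.ofReal c * volume (slice b S s))
    (hc0 : 0 < c) (hps : PositivelySpans n) (hb : ∀ i, b i 0 = n i) {j : ι}
    (hj : ∃ x ∈ polyhedron n h, ⟪x, n j⟫ = h j) :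
    faceArea (polyhedron n h) (n j) = ENNReal.ofReal (c * facetVol b n j h) := by
  have h1 := hc (b j) (polyhedron n h) (h j)
  rw [hb] at h1
  rw [faceArea, faceIn_eq (P := polyhedron n h) (fun x hx => hx j) hj, h1,
    ENNReal.ofReal_mul hc0.le, facetVol, sliceVol,
    ENNReal.ofReal_toReal (slice_isBounded _ (polyhedron_isBounded hps) _).measure_lt_top.ne]

theorem eq_normal_of_isFacetNormal_polyhedron [Finite ι] (hn : ∀ i, ‖n i‖ = 1)
    (hps : PositivelySpans n) (hne : (openPolyhedron n h).Nonempty) {u : Euc (d + 1)}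
    (hu : IsFacetNormal (polyhedron n h) u) : ∃ j, u = n j := by
  obtain ⟨hu1, hu2⟩ := hu
  obtain ⟨bu, rfl⟩ := exists_orthonormalBasis_zero_eq hu1
  obtain ⟨z, hz, hmax⟩ := (polyhedron_isCompact hps).exists_isMaxOn
    (hne.mono openPolyhedron_subset) (f := fun x => ⟪x, bu 0⟫)
    (Continuous.continuousOn (by fun_prop))
  obtain ⟨c, hc0, hc⟩ := exists_hausdorffMeasure_section_eq d
  rw [faceArea, faceIn_eq hmax ⟨z, hz, rfl⟩, hc, CanonicallyOrderedAdd.mul_pos] at hu2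
  have hint : (interior (slice bu (polyhedron n h) ⟪z, bu 0⟫)).Nonempty := by
    by_contra hemp
    rw [not_nonempty_iff_eq_empty] at hemp
    refine hu2.2.ne' (volume_eq_zero_of_interior_eq_empty ?_ hemp)
    rw [slice_polyhedron]
    exact polyhedron_convex
  obtain ⟨y, hy⟩ := hint
  have hyP : sliceMap bu ⟪z, bu 0⟫ y ∈ polyhedron n h :=
    (interior_subset hy : y ∈ slice bu (polyhedron n h) ⟪z, bu 0⟫)
  have hact : ∃ i, ⟪sliceMap bu ⟪z, bu 0⟫ y, n i⟫ = h i := by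
    by_contra! hne'
    have h1 : sliceMap bu ⟪z, bu 0⟫ y ∈ openPolyhedron n h := fun i => (hyP i).lt_of_ne (hne' i)
    have hcont : Continuous fun t : ℝ => sliceMap bu ⟪z, bu 0⟫ y + t • bu 0 := by fun_prop
    have h2 : ∀ᶠ t in 𝓝[>] (0 : ℝ), sliceMap bu ⟪z, bu 0⟫ y + t • bu 0 ∈ openPolyhedron n h :=
      ((hcont.tendsto 0).eventually (openPolyhedron_isOpen.mem_nhds
        (by simpa using h1))).filter_mono nhdsWithin_le_nhds
    obtain ⟨t, ht, ht0⟩ := (h2.and self_mem_nhdsWithin).exists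
    have h3 := hmax (openPolyhedron_subset ht)
    simp only [mem_ofPred_eq, inner_add_left, inner_sliceMap_zero, real_inner_smul_left,
      real_inner_self_eq_norm_sq, bu.orthonormal.1] at h3
    have : (0 : ℝ) < t := ht0
    linarith
  obtain ⟨i, hi⟩ := hact
  have hpr : sliceProj bu (n i) = 0 := by
    by_contra hpr
    rw [slice_polyhedron] at hy
    have := inner_lt_of_mem_interior_polyhedron (i := i) hpr hy
    rw [inner_sliceMap] at hi
    linarith
  rcases eq_or_eq_neg_of_sliceProj_eq_zero bu (hn i) hpr with h1 | h1
  · exact ⟨i, h1.symm⟩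
  · exfalso
    obtain ⟨x, hx⟩ := hne
    have h2 := hmax (openPolyhedron_subset hx)
    have h3 := hx i
    rw [h1, inner_neg_right] at h3 hi
    rw [inner_sliceMap_zero] at hi
    simp only [mem_ofPred_eq] at h2
    linarith

end Faces

section FacetDescription

/-- A segment from a point outside a convex body to an interior point enters the body at a point
where a supporting hyperplane separates the outer point from the body. -/
theorem exists_supporting_on_segment {m : ℕ} {P : Set (Euc m)} (hP : Convex ℝ P)
    (hPc : IsClosed P) {x z : Euc m} (hx : x ∉ P) (hz : z ∈ interior P) :
    ∃ y ∈ P, ∃ u : Euc m, ‖u‖ = 1 ∧ (∀ w ∈ P, ⟪w, u⟫ ≤ ⟪y, u⟫) ∧ ⟪y, u⟫ < ⟪x, u⟫ ∧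
      ∃ r : ℝ, AffineMap.lineMap x y r = z := by
  set f : ℝ → Euc m := fun t => x + t • (z - x) with hf
  have hfc : Continuous f := by fun_prop
  have hcomp : IsCompact (Icc (0 : ℝ) 1 ∩ f ⁻¹' P) := isCompact_Icc.inter_right (hPc.preimage hfc)
  obtain ⟨t, ⟨⟨ht0, ht1⟩, htP⟩, hmin⟩ := hcomp.exists_isLeast
    ⟨1, ⟨zero_le_one, le_rfl⟩, by simpa [hf] using interior_subset hz⟩
  have htpos : 0 < t := by
    refine ht0.lt_of_ne fun h0 => hx ?_
    simpa [hf, ← h0] using htP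
  have hyint : f t ∉ interior P := by
    intro hint
    have hev : ∀ᶠ r in 𝓝[<] t, f r ∈ interior P :=
      ((hfc.tendsto t).eventually (isOpen_interior.mem_nhds hint)).filter_mono nhdsWithin_le_nhds
    obtain ⟨r, hr, hr0, hrt⟩ := (hev.and (Ioo_mem_nhdsLT htpos)).exists
    exact hrt.not_ge (hmin ⟨⟨hr0.le, hrt.le.trans ht1⟩, (interior_subset hr : f r ∈ P)⟩)
  obtain ⟨g, hg⟩ := geometric_hahn_banach_open_point hP.interior isOpen_interior hyint
  set w := (InnerProductSpace.toDual ℝ (Euc m)).symm g with hw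
  have hgw : ∀ a, g a = ⟪a, w⟫ := fun a => by
    rw [real_inner_comm, hw, InnerProductSpace.toDual_symm_apply]
  have hw0 : w ≠ 0 := by
    intro h0
    have := hg z hz
    simp [hgw, h0] at this
  have hwpos : 0 < ‖w‖⁻¹ := inv_pos.2 (norm_pos_iff.2 hw0)
  have hgz := hg z hz
  have hle : ∀ a ∈ P, g a ≤ g (f t) := by
    intro a ha
    have hsub : closure (interior P) ⊆ {a | g a ≤ g (f t)} :=
      closure_minimal (fun a ha => (hg a ha).le) (isClosed_le g.continuous continuous_const)
    rw [hP.closure_interior_eq_closure_of_nonempty_interior ⟨z, hz⟩] at hsub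
    exact hsub (subset_closure ha)
  refine ⟨f t, htP, ‖w‖⁻¹ • w, by simp [norm_smul, hw0], fun a ha => ?_, ?_, t⁻¹, ?_⟩
  · rw [real_inner_smul_right, real_inner_smul_right, ← hgw, ← hgw]
    exact mul_le_mul_of_nonneg_left (hle a ha) hwpos.le
  · rw [real_inner_smul_right, real_inner_smul_right, ← hgw, ← hgw]
    refine mul_lt_mul_of_pos_left ?_ hwpos
    simp only [hf, map_add, map_smul, map_sub, smul_eq_mul] at hgz ⊢
    nlinarith
  · rw [AffineMap.lineMap_apply, vsub_eq_sub, vadd_eq_add]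
    simp only [hf, add_sub_cancel_left, smul_smul, inv_mul_cancel₀ htpos.ne', one_smul,
      sub_add_cancel]

/-- A point of a polytope on a supporting hyperplane is a convex combination of the vertices on
that hyperplane. -/
theorem mem_convexHull_of_mem_face {m : ℕ} {S : Finset (Euc m)} {y u : Euc m}
    (hy : y ∈ convexHull ℝ (S : Set (Euc m)))
    (hmax : ∀ w ∈ S, ⟪w, u⟫ ≤ ⟪y, u⟫) :
    y ∈ convexHull ℝ {w | w ∈ S ∧ ⟪w, u⟫ = ⟪y, u⟫} := by
  obtain ⟨c, hc0, hc1, hcy⟩ := Finset.mem_convexHull'.1 hy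
  have h1 : ∑ w ∈ S, c w * (⟪y, u⟫ - ⟪w, u⟫) = 0 := by
    have h2 := congrArg (fun z => ⟪z, u⟫) hcy
    simp only [sum_inner, real_inner_smul_left] at h2
    simp only [mul_sub, Finset.sum_sub_distrib, h2, ← Finset.sum_mul, hc1, one_mul, sub_self]
  have h2 : ∀ w ∈ S, c w ≠ 0 → ⟪w, u⟫ = ⟪y, u⟫ := by
    intro w hw hcw
    have h3 := (Finset.sum_eq_zero_iff_of_nonneg fun w hw =>
      mul_nonneg (hc0 w hw) (sub_nonneg.2 (hmax w hw))).1 h1 w hw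
    rcases mul_eq_zero.1 h3 with h4 | h4
    · exact absurd h4 hcw
    · linarith
  have h3 : S.centerMass c id = y := by rw [Finset.centerMass_eq_of_sum_1 _ _ hc1]; exact hcy
  have h4 : (S.filter fun w => c w ≠ 0).centerMass c id ∈
      convexHull ℝ {w | w ∈ S ∧ ⟪w, u⟫ = ⟪y, u⟫} := by
    refine Finset.centerMass_mem_convexHull _ (fun w hw => hc0 w (Finset.mem_filter.1 hw).1) ?_ ?_
    · rw [Finset.sum_filter_ne_zero, hc1]
      exact zero_lt_one
    · intro w hw
      obtain ⟨hwS, hcw⟩ := Finset.mem_filter.1 hw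
      exact ⟨hwS, h2 w hwS hcw⟩
  rwa [Finset.centerMass_filter_ne_zero, h3] at h4

variable {d : ℕ}

/-- The projection `sliceProj` as a linear map. -/
def sliceProjLinear (b : OrthonormalBasis (Fin (d + 1)) ℝ (Euc (d + 1))) :
    Euc (d + 1) →ₗ[ℝ] Euc d where
  toFun := sliceProj b
  map_add' x y := by ext i; simp [sliceProj, inner_add_left]
  map_smul' r x := by ext i; simp [sliceProj, real_inner_smul_left]

theorem sliceProj_sliceMap (b : OrthonormalBasis (Fin (d + 1)) ℝ (Euc (d + 1))) (s : ℝ)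
    (z : Euc d) : sliceProj b (sliceMap b s z) = z := by
  have := sliceMap_inner_sliceProj b (sliceMap b s z)
  rw [inner_sliceMap_zero] at this
  exact (sliceMap_isometry b s).injective this

theorem slice_convex (b : OrthonormalBasis (Fin (d + 1)) ℝ (Euc (d + 1)))
    {P : Set (Euc (d + 1))} (hP : Convex ℝ P) (s : ℝ) : Convex ℝ (slice b P s) := by
  intro y hy z hz p q hp hq hpq
  have := hP hy hz hp hq hpq
  rwa [← sliceMap_combo, ← add_mul, hpq, one_mul] at this

/-- A supporting hyperplane of a polytope whose vertices on it span, together with one more point,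
the whole space, contains a facet. -/
theorem isFacetNormal_of_affineSpan_eq_top {P : Set (Euc (d + 1))} (hP : Convex ℝ P)
    {u x y : Euc (d + 1)} (hu : ‖u‖ = 1)
    (hmax : ∀ w ∈ P, ⟪w, u⟫ ≤ ⟪y, u⟫) (hxy : ⟪y, u⟫ < ⟪x, u⟫)
    {T : Set (Euc (d + 1))} (hTP : T ⊆ P) (hTu : ∀ w ∈ T, ⟪w, u⟫ = ⟪y, u⟫)
    (hy : y ∈ affineSpan ℝ T) (hyP : y ∈ P) (htop : affineSpan ℝ (insert x T) = ⊤) :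
    IsFacetNormal P u := by
  obtain ⟨b, rfl⟩ := exists_orthonormalBasis_zero_eq hu
  obtain ⟨c, hc0, hc⟩ := exists_hausdorffMeasure_section_eq d
  refine ⟨hu, ?_⟩
  rw [faceArea, faceIn_eq hmax ⟨y, hyP, rfl⟩, hc, CanonicallyOrderedAdd.mul_pos]
  refine ⟨ENNReal.ofReal_pos.2 hc0, ?_⟩
  have hspan : affineSpan ℝ (sliceProj b '' T) = ⊤ := by
    rw [eq_top_iff]
    intro z _
    have h1 : sliceMap b ⟪y, b 0⟫ z ∈ affineSpan ℝ (insert x (affineSpan ℝ T : Set _)) := by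
      rw [affineSpan_insert_affineSpan, htop]
      exact AffineSubspace.mem_top _ _ _
    rw [AffineSubspace.mem_affineSpan_insert_iff hy] at h1
    obtain ⟨r, p, hp, hr⟩ := h1
    have hpu : ⟪p, b 0⟫ = ⟪y, b 0⟫ := by
      have hle : affineSpan ℝ T ≤ (affineSpan ℝ {⟪y, b 0⟫}).comap
          (innerSL ℝ (b 0)).toLinearMap.toAffineMap := by
        refine affineSpan_le.2 fun w hw => ?_
        simpa [real_inner_comm] using hTu w hw
      have := hle hp
      simpa [real_inner_comm] using this
    have hr0 : r = 0 := by
      have h2 := congrArg (fun w => ⟪w, b 0⟫) hr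
      simp only [inner_sliceMap_zero, vsub_eq_sub, vadd_eq_add, inner_add_left,
        real_inner_smul_left, inner_sub_left, hpu] at h2
      have h3 : r * (⟪x, b 0⟫ - ⟪y, b 0⟫) = 0 := by linarith
      exact (mul_eq_zero.1 h3).resolve_right (by linarith)
    rw [hr0, zero_smul, zero_vadd] at hr
    have hle : affineSpan ℝ T ≤ (affineSpan ℝ (sliceProj b '' T)).comap
        (sliceProjLinear b).toAffineMap :=
      affineSpan_le.2 fun w hw => subset_affineSpan ℝ _ (mem_image_of_mem (sliceProj b) hw)
    have h4 : sliceProj b p ∈ affineSpan ℝ (sliceProj b '' T) := hle hp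
    rwa [← hr, sliceProj_sliceMap] at h4
  have hint := interior_convexHull_nonempty_iff_affineSpan_eq_top.2 hspan
  have hsub : convexHull ℝ (sliceProj b '' T) ⊆ slice b P ⟪y, b 0⟫ := by
    refine convexHull_min ?_ (slice_convex b hP _)
    rintro _ ⟨w, hw, rfl⟩
    rw [slice, mem_preimage, ← hTu w hw, sliceMap_inner_sliceProj]
    exact hTP hw
  exact (isOpen_interior.measure_pos volume hint).trans_le
    (measure_mono (interior_subset.trans hsub))

/-- A polytope is the intersection of the half-spaces given by its facets. -/
theorem polyhedron_subset_of_isFacetNormal {ι : Type*} {n : ι → Euc (d + 1)} {h : ι → ℝ}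
    {P : Set (Euc (d + 1))} (hpoly : IsPolytope P) (hbody : IsConvexBody P)
    (hfacet : ∀ u, IsFacetNormal P u → ∃ j, u = n j)
    (hh : ∀ j, ∃ x ∈ P, ⟪x, n j⟫ = h j) : polyhedron n h ⊆ P := by
  obtain ⟨hconv, hcomp, hint⟩ := hbody
  obtain ⟨S, hS⟩ := hpoly
  intro x hx
  by_contra hxP
  obtain ⟨z, hz, hzT⟩ : ∃ z ∈ interior P, ∀ T ∈ S.powerset,
      affineSpan ℝ (insert x (T : Set (Euc (d + 1)))) ≠ ⊤ →
      z ∉ affineSpan ℝ (insert x (T : Set (Euc (d + 1)))) := by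
    by_contra! hcon
    refine (isOpen_interior.measure_pos volume hint).ne' (measure_mono_null (t := ⋃ T ∈ S.powerset,
      {z | affineSpan ℝ (insert x (T : Set (Euc (d + 1)))) ≠ ⊤ ∧
        z ∈ affineSpan ℝ (insert x (T : Set (Euc (d + 1))))}) (fun z hz => ?_) ?_)
    · obtain ⟨T, hT, h1, h2⟩ := hcon z hz
      exact mem_biUnion hT ⟨h1, h2⟩
    · refine (measure_biUnion_null_iff S.powerset.countable_toSet).2 fun T _ => ?_
      by_cases hT : affineSpan ℝ (insert x (T : Set (Euc (d + 1)))) = ⊤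
      · simp [hT]
      · exact measure_mono_null (fun z hz => hz.2) (Measure.addHaar_affineSubspace volume _ hT)
  obtain ⟨y, hy, u, hu, hmax, hxy, r, hr⟩ :=
    exists_supporting_on_segment hconv hcomp.isClosed hxP hz
  have hSP : (S : Set (Euc (d + 1))) ⊆ P := hS ▸ subset_convexHull ℝ _
  have hyT := mem_convexHull_of_mem_face (hS ▸ hy) fun w hw => hmax w (hSP hw)
  classical
  set T := S.filter fun w => ⟪w, u⟫ = ⟪y, u⟫ with hT
  have hTset : {w | w ∈ S ∧ ⟪w, u⟫ = ⟪y, u⟫} = (T : Set (Euc (d + 1))) := by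
    ext w; simp [hT]
  rw [hTset] at hyT
  have hyA := convexHull_subset_affineSpan _ hyT
  have htop : affineSpan ℝ (insert x (T : Set (Euc (d + 1)))) = ⊤ := by
    by_contra hne
    refine hzT T (Finset.mem_powerset.2 (Finset.filter_subset _ _)) hne ?_
    rw [← hr]
    exact AffineMap.lineMap_mem r (subset_affineSpan ℝ _ (mem_insert _ _))
      (affineSpan_mono ℝ (subset_insert _ _) hyA)
  obtain ⟨j, rfl⟩ := hfacet u (isFacetNormal_of_affineSpan_eq_top hconv hu hmax hxy
    (fun w hw => hSP (Finset.mem_filter.1 hw).1) (fun w hw => (Finset.mem_filter.1 hw).2)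
    hyA hy htop)
  obtain ⟨w, hw, hwj⟩ := hh j
  have h1 := hx j
  have h2 := hmax w hw
  linarith

end FacetDescription

/-- A polytope with facet normals among `n` is a polyhedron with normals `n` whose facet volumes
are, up to the normalization of the Hausdorff measure, the areas of its faces. -/
theorem exists_polyhedron_eq {ι : Type*} [Finite ι] {d : ℕ} {n : ι → Euc (d + 1)} {F : ι → ℝ}
    {b : ι → OrthonormalBasis (Fin (d + 1)) ℝ (Euc (d + 1))} {c : ℝ}
    (hc : ∀ (b : OrthonormalBasis (Fin (d + 1)) ℝ (Euc (d + 1))) (S : Set (Euc (d + 1))) (s : ℝ),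
      μH[((d + 1 : ℕ) : ℝ) - 1] {x ∈ S | ⟪x, b 0⟫ = s} = ENNReal.ofReal c * volume (slice b S s))
    (hc0 : 0 < c) (hn : ∀ i, ‖n i‖ = 1) (hps : PositivelySpans n) (hb : ∀ i, b i 0 = n i)
    (hF : ∀ j, 0 < F j) {P : Set (Euc (d + 1))} (hpoly : IsPolytope P) (hbody : IsConvexBody P)
    (harea : ∀ j, faceArea P (n j) = ENNReal.ofReal (F j))
    (hfacet : ∀ u, IsFacetNormal P u → ∃ j, u = n j) :
    ∃ h : ι → ℝ, P = polyhedron n h ∧ (openPolyhedron n h).Nonempty ∧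
      ∀ j, facetVol b n j h = F j / c := by
  choose x hxP hxmax using fun j => hbody.2.1.exists_isMaxOn (hbody.2.2.mono interior_subset)
    (f := fun x => ⟪x, n j⟫) (Continuous.continuousOn (by fun_prop))
  set h : ι → ℝ := fun j => ⟪x j, n j⟫ with hh
  have hP : P = polyhedron n h := Subset.antisymm (fun y hy j => hxmax j hy)
    (polyhedron_subset_of_isFacetNormal hpoly hbody hfacet fun j => ⟨x j, hxP j, rfl⟩)
  refine ⟨h, hP, ?_, fun j => ?_⟩
  · have := hbody.2.2
    rw [hP] at this
    exact this.mono (polyhedron_interior_subset fun i hi => by simpa [hi] using hn i)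
  · have h2 : 0 ≤ facetVol b n j h := sliceVol_nonneg _ _
    have h1 := faceArea_polyhedron hc hc0 hps hb (j := j) (h := h) ⟨x j, hP ▸ hxP j, rfl⟩
    rw [← hP, harea, ENNReal.ofReal_eq_ofReal_iff (hF j).le (mul_nonneg hc0.le h2)] at h1
    rw [h1]
    field_simp

/-- Minkowski's theorem for polytopes: existence and uniqueness up to
translation of a polytope with prescribed facet normals and facet areas. -/
theorem minkowski_polytope {m k : ℕ} (hm : 2 ≤ m)
    (n : Fin k → Euc m) (F : Fin k → ℝ)
    (hF : ∀ j, 0 < F j) (hn : ∀ j, ‖n j‖ = 1) (hinj : Function.Injective n)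
    (hspan : ¬∃ f : Euc m →ₗ[ℝ] ℝ, f ≠ 0 ∧ ∀ j, f (n j) = 0)
    (hsum : ∑ j, F j • n j = 0) :
    (∃ P : Set (Euc m), IsPolytope P ∧ IsConvexBody P ∧
        (∀ j, faceArea P (n j) = ENNReal.ofReal (F j)) ∧
        (∀ u : Euc m, IsFacetNormal P u → ∃ j, u = n j)) ∧
    ∀ P Q : Set (Euc m),
      (IsPolytope P ∧ IsConvexBody P ∧
        (∀ j, faceArea P (n j) = ENNReal.ofReal (F j)) ∧
        (∀ u : Euc m, IsFacetNormal P u → ∃ j, u = n j)) →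
      (IsPolytope Q ∧ IsConvexBody Q ∧
        (∀ j, faceArea Q (n j) = ENNReal.ofReal (F j)) ∧
        (∀ u : Euc m, IsFacetNormal Q u → ∃ j, u = n j)) →
      ∃ v : Euc m, Q = v +ᵥ P := by
  obtain ⟨d, rfl⟩ : ∃ d, m = d + 1 := ⟨m - 1, by omega⟩
  have hd : d ≠ 0 := by omega
  have hps := positivelySpans_of_sum_eq_zero (by omega) hF hspan hsum
  choose b hb using fun j => exists_orthonormalBasis_zero_eq (hn j)
  obtain ⟨c, hc0, hc⟩ := exists_hausdorffMeasure_section_eq d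
  constructor
  · have : Nonempty (Fin k) := by
      obtain ⟨_, -, hj⟩ := hps
      exact ⟨(hj 0).choose⟩
    obtain ⟨h, hne, hh⟩ := exists_facetVol_eq hd hn hinj hps hb
      (fun j => div_pos (hF j) hc0) (F := fun j => F j / c) (by
        have h1 : ∀ j, (F j / c) • n j = c⁻¹ • F j • n j := fun j => by
          rw [smul_smul, div_eq_inv_mul]
        simp only [h1, ← Finset.smul_sum, hsum, smul_zero])
    refine ⟨polyhedron n h, isPolytope_polyhedron hps, isConvexBody_polyhedron hps hne,
      fun j => ?_, fun u hu => eq_normal_of_isFacetNormal_polyhedron hn hps hne hu⟩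
    have hj : ∃ x ∈ polyhedron n h, ⟪x, n j⟫ = h j := by
      have h1 : 0 < sliceVol (b j) n h (h j) := (div_pos (hF j) hc0).trans_eq (hh j).symm
      simpa only [hb] using exists_mem_of_sliceVol_pos h1
    rw [faceArea_polyhedron hc hc0 hps hb hj, hh, mul_div_cancel₀ _ hc0.ne']
  · rintro P Q ⟨hP1, hP2, hP3, hP4⟩ ⟨hQ1, hQ2, hQ3, hQ4⟩
    obtain ⟨h, rfl, hne, hh⟩ := exists_polyhedron_eq hc hc0 hn hps hb hF hP1 hP2 hP3 hP4
    obtain ⟨q, rfl, hqne, hq⟩ := exists_polyhedron_eq hc hc0 hn hps hb hF hQ1 hQ2 hQ3 hQ4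
    exact exists_translation_of_facetVol_eq hd hn hinj hps hb hne hqne
      (fun j => (hh j).symm ▸ div_pos (hF j) hc0) fun j => (hh j).trans (hq j).symm
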